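/- arXiv:1710.06694 — 2 statements merged into one kernel-verified Lean document; each statement's English description precedes it below -/
import Mathlib

section
/- Let Φ be an irreducible crystallographic root system of rank n, W the associated affine Weyl group with set of reflections T, W_0 = W_Φ the finite Weyl group, and p : W → W_0 the projection s_{α,k} ↦ s_α. Let w ∈ W be a quasi-Coxeter element for (W,T). Then for every reduced reflection factorization (s_{β_1,k_1},…,s_{β_{n+1},k_{n+1}}) ∈ Red_T(w), one has ⟨s_{β_1},…,s_{β_{n+1}}⟩ = W_0. -/
open scoped RealInnerProductSpace

noncomputable section

variable {V : Type*} [NormedAddCommGroup V] [InnerProductSpace ℝ V]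

/-- The coroot `α^∨ = 2α/(α|α)` of a vector `α`. -/
def coroot (α : V) : V := (2 / ⟪α, α⟫) • α

/-- The affine reflection `s_{α,k} : v ↦ v - ((v|α) - k)α^∨`, as a function. -/
def sAffFun (α : V) (k : ℝ) (v : V) : V := v - (⟪v, α⟫ - k) • coroot α

theorem sAffFun_involutive (α : V) (k : ℝ) : Function.Involutive (sAffFun α k) := by
  intro v
  by_cases h : α = 0
  · simp [sAffFun, coroot, h]
  · have h2 : ⟪α, α⟫ ≠ 0 := by
      intro hz
      exact h (inner_self_eq_zero.mp hz)
    have hr : ⟪coroot α, α⟫ = 2 := by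
      simp only [coroot, real_inner_smul_left]
      field_simp
    simp only [sAffFun, inner_sub_left, real_inner_smul_left, hr]
    have : ⟪v, α⟫ - (⟪v, α⟫ - k) * 2 - k = -(⟪v, α⟫ - k) := by ring
    rw [this, neg_smul, sub_neg_eq_add, sub_add_cancel]

/-- The affine reflection `s_{α,k}` as a permutation of `V`. -/
def sAff (α : V) (k : ℝ) : Equiv.Perm V :=
  Function.Involutive.toPerm _ (sAffFun_involutive α k)

/-- The translation `Tr(x) : v ↦ v + x`, as a function. -/
def trFun (x : V) (v : V) : V := v + x

/-- The translation `Tr(x) : v ↦ v + x`, as a permutation of `V`. -/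
def trPerm (x : V) : Equiv.Perm V := Equiv.addRight x

/-- A crystallographic (reduced) root system in a Euclidean space `V`. -/
structure IsCrystRootSystem (Φ : Set V) : Prop where
  finite : Φ.Finite
  nonempty : Φ.Nonempty
  ne_zero : ∀ α ∈ Φ, α ≠ 0
  spanning : Submodule.span ℝ Φ = ⊤
  refl_mem : ∀ α ∈ Φ, ∀ β ∈ Φ, sAffFun α 0 β ∈ Φ
  reduced : ∀ α ∈ Φ, ∀ c : ℝ, c • α ∈ Φ → c = 1 ∨ c = -1
  cryst : ∀ α ∈ Φ, ∀ β ∈ Φ, ∃ n : ℤ, 2 * ⟪β, α⟫ / ⟪α, α⟫ = (n : ℝ)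

/-- The (finite) Weyl group of `Φ`, generated by the reflections `s_α`. -/
def WeylGroup (Φ : Set V) : Subgroup (Equiv.Perm V) :=
  Subgroup.closure {g | ∃ α ∈ Φ, g = sAff α 0}

/-- The affine Weyl group of `Φ`, generated by all affine reflections `s_{α,k}`, `k ∈ ℤ`. -/
def AffWeylGroup (Φ : Set V) : Subgroup (Equiv.Perm V) :=
  Subgroup.closure {g | ∃ α ∈ Φ, ∃ k : ℤ, g = sAff α k}

/-- The set of reflections of the affine Weyl group. -/
def AffReflections (Φ : Set V) : Set (Equiv.Perm V) :=
  {g | ∃ α ∈ Φ, ∃ k : ℤ, g = sAff α k}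

/-- The coweight lattice `P(Φ^∨) = {x | (x|α) ∈ ℤ for all α ∈ Φ}`. -/
def coweightLattice (Φ : Set V) : Set V :=
  {x | ∀ α ∈ Φ, ∃ n : ℤ, ⟪x, α⟫ = (n : ℝ)}

/-- `Φ` is irreducible: it admits no decomposition into two nonempty orthogonal parts. -/
def IsIrreducibleRS (Φ : Set V) : Prop :=
  ∀ Φ₁ Φ₂ : Set V, Φ₁ ∪ Φ₂ = Φ → (∀ α ∈ Φ₁, ∀ β ∈ Φ₂, ⟪α, β⟫ = 0) →
    Φ₁ = ∅ ∨ Φ₂ = ∅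

section Hurwitz

variable {G : Type*} [Group G]

/-- One Hurwitz move: replace two adjacent entries `(a, b)` by `(a * b * a⁻¹, a)`. -/
def HurwitzMove (l l' : List G) : Prop :=
  ∃ (u v : List G) (a b : G),
    l = u ++ a :: b :: v ∧ l' = u ++ (a * b * a⁻¹) :: a :: v

/-- Hurwitz equivalence: two tuples are Hurwitz equivalent iff they lie in the same
orbit of the Hurwitz action of the braid group. -/
def HurwitzEquiv (l l' : List G) : Prop := Relation.EqvGen HurwitzMove l l'

/-- The reflection length `ℓ_T(w)` of `w` with respect to a generating set `T`. -/
noncomputable def reflLength (T : Set G) (w : G) : ℕ :=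
  sInf {k | ∃ l : List G, (∀ t ∈ l, t ∈ T) ∧ l.prod = w ∧ l.length = k}

/-- `l` is a reduced `T`-factorization of `w`, i.e. an element of `Red_T(w)`. -/
def IsRedFac (T : Set G) (w : G) (l : List G) : Prop :=
  (∀ t ∈ l, t ∈ T) ∧ l.prod = w ∧ l.length = reflLength T w

end Hurwitz


/-- `w` is a quasi-Coxeter element for the affine dual Coxeter system `(W,T)` of rank `n+1`
associated to `Φ`: some reduced reflection factorization of `w` of length `n+1` generates
the whole affine Weyl group. -/
def IsQuasiCoxeterAff (Φ : Set V) (n : ℕ) (w : Equiv.Perm V) : Prop :=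
  ∃ t : Fin (n + 1) → Equiv.Perm V,
    (∀ i, t i ∈ AffReflections Φ) ∧
    (List.ofFn t).prod = w ∧
    n + 1 = reflLength (AffReflections Φ) w ∧
    Subgroup.closure (Set.range t) = AffWeylGroup Φ


namespace QC

structure RS (Ψ : Set V) : Prop where
  ne_zero : ∀ α ∈ Ψ, α ≠ 0
  refl_mem : ∀ α ∈ Ψ, ∀ β ∈ Ψ, sAffFun α 0 β ∈ Ψ
  reduced : ∀ α ∈ Ψ, ∀ c : ℝ, c • α ∈ Ψ → c = 1 ∨ c = -1
  cryst : ∀ α ∈ Ψ, ∀ β ∈ Ψ, ∃ n : ℤ, 2 * ⟪β, α⟫ / ⟪α, α⟫ = (n : ℝ)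

theorem rf_apply (a v : V) : sAffFun a 0 v = v - (2 * ⟪v, a⟫ / ⟪a, a⟫) • a := by
  simp only [sAffFun, coroot, sub_zero, smul_smul]
  congr 2; ring

theorem inner_pos' {a : V} (h : a ≠ 0) : 0 < ⟪a, a⟫ := real_inner_self_pos.mpr h

theorem inner_coroot_self {a : V} (h : a ≠ 0) : ⟪coroot a, coroot a⟫ = 4 / ⟪a, a⟫ := by
  have := (inner_pos' h).ne'
  simp only [coroot, real_inner_smul_left, real_inner_smul_right]
  field_simp; norm_num

theorem coroot_ne_zero {a : V} (h : a ≠ 0) : coroot a ≠ 0 := by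
  have := (inner_pos' h)
  simp only [coroot]
  exact smul_ne_zero (by positivity) h

theorem coroot_coroot {a : V} (h : a ≠ 0) : coroot (coroot a) = a := by
  have := (inner_pos' h).ne'
  conv_lhs => rw [coroot, inner_coroot_self h, coroot, smul_smul]
  rw [show 2 / (4 / ⟪a, a⟫) * (2 / ⟪a, a⟫) = 1 by field_simp; norm_num, one_smul]

theorem rf_coroot {a : V} (h : a ≠ 0) (v : V) : sAffFun (coroot a) 0 v = sAffFun a 0 v := by
  have := (inner_pos' h).ne'
  simp only [sAffFun, coroot_coroot h, sub_zero]
  simp only [coroot, real_inner_smul_right, smul_smul]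
  congr 2; ring

theorem rf_inner (a v w : V) (h : a ≠ 0) : ⟪sAffFun a 0 v, sAffFun a 0 w⟫ = ⟪v, w⟫ := by
  have := (inner_pos' h).ne'
  simp only [rf_apply, inner_sub_left, inner_sub_right, real_inner_smul_left, real_inner_smul_right]
  rw [real_inner_comm w a]
  field_simp; ring

theorem rf_inner_left (a v w : V) : ⟪sAffFun a 0 v, w⟫ = ⟪v, sAffFun a 0 w⟫ := by
  simp only [rf_apply, inner_sub_left, inner_sub_right, real_inner_smul_left, real_inner_smul_right]
  rw [real_inner_comm w a]
  ring

theorem rf_smul (a v : V) (c : ℝ) : sAffFun a 0 (c • v) = c • sAffFun a 0 v := by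
  simp only [rf_apply, real_inner_smul_left, smul_sub, smul_smul]
  congr 2; ring

theorem rf_add (a v w : V) : sAffFun a 0 (v + w) = sAffFun a 0 v + sAffFun a 0 w := by
  simp only [sAffFun, inner_add_left, sub_zero, add_smul]; abel

theorem coroot_rf (a v : V) (h : a ≠ 0) : coroot (sAffFun a 0 v) = sAffFun a 0 (coroot v) := by
  rw [coroot, rf_inner a v v h, coroot, rf_smul]

theorem rf_self {a : V} (h : a ≠ 0) : sAffFun a 0 a = -a := by
  have := (inner_pos' h).ne'
  rw [rf_apply, mul_div_assoc, div_self this, mul_one, two_smul]; abel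

theorem RS.neg {Ψ : Set V} (h : RS Ψ) {a : V} (ha : a ∈ Ψ) : -a ∈ Ψ := by
  rw [← rf_self (h.ne_zero a ha)]; exact h.refl_mem a ha a ha

theorem RS.coroots {Ψ : Set V} (h : RS Ψ) : RS (coroot '' Ψ) := by
  refine ⟨?_, ?_, ?_, ?_⟩
  · rintro _ ⟨a, ha, rfl⟩; exact coroot_ne_zero (h.ne_zero a ha)
  · rintro _ ⟨a, ha, rfl⟩ _ ⟨b, hb, rfl⟩
    rw [rf_coroot (h.ne_zero a ha), ← coroot_rf a b (h.ne_zero a ha)]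
    exact ⟨_, h.refl_mem a ha b hb, rfl⟩
  · rintro _ ⟨a, ha, rfl⟩ c ⟨b, hb, hbc⟩
    have h0 := h.ne_zero a ha
    have hb0 := h.ne_zero b hb
    have hc : c ≠ 0 := by
      rintro rfl
      rw [zero_smul] at hbc
      exact coroot_ne_zero hb0 hbc
    have e : b = c⁻¹ • a := by
      have := (inner_pos' (coroot_ne_zero h0)).ne'
      rw [← coroot_coroot hb0, hbc, coroot, real_inner_smul_left, real_inner_smul_right, smul_smul]
      conv_rhs => rw [← coroot_coroot h0]
      conv_rhs => rw [coroot, smul_smul]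
      congr 1
      field_simp
    rcases h.reduced a ha c⁻¹ (e ▸ hb) with h1 | h1
    · left; rw [← inv_inv c, h1]; norm_num
    · right; rw [← inv_inv c, h1]; norm_num
  · rintro _ ⟨a, ha, rfl⟩ _ ⟨b, hb, rfl⟩
    obtain ⟨m, hm⟩ := h.cryst b hb a ha
    refine ⟨m, ?_⟩
    rw [← hm, inner_coroot_self (h.ne_zero a ha)]
    have := (inner_pos' (h.ne_zero a ha)).ne'
    have := (inner_pos' (h.ne_zero b hb)).ne'
    simp only [coroot, real_inner_smul_left, real_inner_smul_right]
    rw [real_inner_comm a b]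
    field_simp; ring

/-- integer pairing data of two non-orthogonal roots. -/
theorem RS.pair {Ψ : Set V} (h : RS Ψ) {a b : V} (ha : a ∈ Ψ) (hb : b ∈ Ψ) :
    ∃ x y : ℤ, 2 * ⟪a, b⟫ = x * ⟪b, b⟫ ∧ 2 * ⟪a, b⟫ = y * ⟪a, a⟫ ∧
      (x * y ≤ 3 ∨ a = b ∨ a = -b) := by
  obtain ⟨x, hx⟩ := h.cryst b hb a ha
  obtain ⟨y, hy⟩ := h.cryst a ha b hb
  have pa := inner_pos' (h.ne_zero a ha)
  have pb := inner_pos' (h.ne_zero b hb)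
  rw [div_eq_iff pb.ne'] at hx
  rw [div_eq_iff pa.ne', real_inner_comm] at hy
  refine ⟨x, y, hx, hy, ?_⟩
  by_contra! hcon
  obtain ⟨h4, hab, hab'⟩ := hcon
  have h4' : (4 : ℝ) ≤ x * y := by exact_mod_cast (by omega : 4 ≤ x * y)
  -- the vector a - (⟪a,b⟫/⟪b,b⟫) b vanishes
  have key : 4 * ⟪a, b⟫ * ⟪a, b⟫ ≥ 4 * (⟪a, a⟫ * ⟪b, b⟫) := by
    have : 4 * ⟪a, b⟫ * ⟪a, b⟫ = (x * y) * (⟪a, a⟫ * ⟪b, b⟫) := by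
      calc 4 * ⟪a, b⟫ * ⟪a, b⟫ = (2 * ⟪a, b⟫) * (2 * ⟪a, b⟫) := by ring
        _ = (x * ⟪b, b⟫) * (y * ⟪a, a⟫) := by rw [← hx, ← hy]
        _ = _ := by ring
    rw [this]
    exact mul_le_mul_of_nonneg_right h4' (by positivity)
  have e : a - (⟪a, b⟫ / ⟪b, b⟫) • b = 0 := by
    rw [← inner_self_eq_zero (𝕜 := ℝ)]
    apply le_antisymm _ real_inner_self_nonneg
    simp only [inner_sub_left, inner_sub_right, real_inner_smul_left, real_inner_smul_right]
    rw [real_inner_comm a b]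
    have : ⟪a, a⟫ - ⟪a, b⟫ / ⟪b, b⟫ * ⟪a, b⟫ - (⟪a, b⟫ / ⟪b, b⟫ * ⟪a, b⟫ - ⟪a, b⟫ / ⟪b, b⟫ * (⟪a, b⟫ / ⟪b, b⟫ * ⟪b, b⟫))
      = (⟪a, a⟫ * ⟪b, b⟫ - ⟪a, b⟫ * ⟪a, b⟫) / ⟪b, b⟫ := by
      field_simp; ring
    rw [this]
    apply div_nonpos_of_nonpos_of_nonneg <;> linarith
  have e' := sub_eq_zero.mp e
  rcases h.reduced b hb _ (e' ▸ ha) with h1 | h1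
  · rw [h1, one_smul] at e'; exact hab e'
  · rw [h1, neg_one_smul] at e'; exact hab' e'

theorem RS.add_mem {Ψ : Set V} (h : RS Ψ) {a b : V} (ha : a ∈ Ψ) (hb : b ∈ Ψ)
    (hn : ⟪a, b⟫ < 0) : a + b = 0 ∨ a + b ∈ Ψ := by
  have pa := inner_pos' (h.ne_zero a ha)
  have pb := inner_pos' (h.ne_zero b hb)
  obtain ⟨x, y, hx, hy, h3 | rfl | rfl⟩ := h.pair ha hb
  · have hx0 : x < 0 := by
      by_contra! hc
      have : (0 : ℝ) ≤ x := by exact_mod_cast hc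
      nlinarith
    have hy0 : y < 0 := by
      by_contra! hc
      have : (0 : ℝ) ≤ y := by exact_mod_cast hc
      nlinarith
    have : x = -1 ∨ y = -1 := by
      by_contra! hc
      have : x ≤ -2 := by omega
      have : y ≤ -2 := by omega
      nlinarith
    right
    rcases this with rfl | rfl
    · have := h.refl_mem b hb a ha
      rw [rf_apply, hx, mul_div_assoc, div_self pb.ne'] at this
      simpa using this
    · have := h.refl_mem a ha b hb
      rw [rf_apply, real_inner_comm, hy, mul_div_assoc, div_self pa.ne'] at this
      simpa [add_comm] using this
  · linarith
  · left; simp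

theorem RS.exists_list {Ψ : Set V} (h : RS Ψ) {x : V} (hx : x ∈ AddSubgroup.closure Ψ) :
    ∃ l : List V, (∀ a ∈ l, a ∈ Ψ) ∧ l.sum = x := by
  induction hx using AddSubgroup.closure_induction with
  | mem x hx => exact ⟨[x], by simpa using hx, by simp⟩
  | zero => exact ⟨[], by simp, by simp⟩
  | add x y _ _ hx hy =>
    obtain ⟨l, hl, rfl⟩ := hx
    obtain ⟨l', hl', rfl⟩ := hy
    refine ⟨l ++ l', ?_, by simp⟩
    intro a ha
    rcases List.mem_append.mp ha with h1 | h1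
    · exact hl a h1
    · exact hl' a h1
  | neg x _ hx =>
    obtain ⟨l, hl, rfl⟩ := hx
    refine ⟨l.map (fun a => -a), ?_, ?_⟩
    · intro a ha
      obtain ⟨b, hb, rfl⟩ := List.mem_map.mp ha
      exact h.neg (hl b hb)
    · rw [List.sum_neg]

theorem RS.exists_list_nonneg {Ψ : Set V} (h : RS Ψ) {x : V} (hx : x ∈ AddSubgroup.closure Ψ) :
    ∃ l : List V, (∀ a ∈ l, a ∈ Ψ) ∧ l.sum = x ∧ l.Pairwise (fun a b => 0 ≤ ⟪a, b⟫) := by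
  classical
  have hex : ∃ m, ∃ l : List V, l.length = m ∧ (∀ a ∈ l, a ∈ Ψ) ∧ l.sum = x := by
    obtain ⟨l, h1, h2⟩ := h.exists_list hx
    exact ⟨_, l, rfl, h1, h2⟩
  obtain ⟨l, hlen, hl, hsum⟩ := Nat.find_spec hex
  refine ⟨l, hl, hsum, ?_⟩
  have hmin : ∀ l' : List V, (∀ a ∈ l', a ∈ Ψ) → l'.sum = x → l.length ≤ l'.length := by
    intro l' h1 h2
    rw [hlen]
    exact Nat.find_min' hex ⟨l', rfl, h1, h2⟩
  clear hlen
  by_contra hcon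
  rw [List.pairwise_iff_forall_sublist] at hcon
  push Not at hcon
  obtain ⟨a, b, hs, hneg⟩ := hcon
  obtain ⟨r, hr⟩ := hs.exists_perm_append
  have hmem : ∀ c ∈ [a, b] ++ r, c ∈ Ψ := fun c hc => hl c (hr.mem_iff.mpr hc)
  have hsum' : a + b + r.sum = x := by
    rw [← hsum, hr.sum_eq]; simp [add_assoc]
  have hlen' : l.length = r.length + 2 := by rw [hr.length_eq]; simp
  rcases h.add_mem (hmem a (by simp)) (hmem b (by simp)) hneg with h0 | h0
  · have := hmin r (fun c hc => hmem c (by simp [hc])) (by rw [← hsum', h0, zero_add])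
    omega
  · have := hmin ((a + b) :: r) (by
      intro c hc
      rcases List.mem_cons.mp hc with rfl | hc
      · exact h0
      · exact hmem c (by simp [hc])) (by simpa using hsum')
    simp at this
    omega

theorem inner_list_sum_left (l : List V) (v : V) : ⟪l.sum, v⟫ = (l.map (fun a => ⟪a, v⟫)).sum := by
  induction l with
  | nil => simp
  | cons a l ih => simp [inner_add_left, ih]

theorem list_sum_norm (l : List V) (h : l.Pairwise (fun a b => 0 ≤ ⟪a, b⟫)) :
    (l.map (fun a => ⟪a, a⟫)).sum ≤ ⟪l.sum, l.sum⟫ := by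
  induction l with
  | nil => simp
  | cons a l ih =>
    rw [List.pairwise_cons] at h
    have h1 := ih h.2
    have h2 : 0 ≤ ⟪l.sum, a⟫ := by
      rw [inner_list_sum_left]
      apply List.sum_nonneg
      intro x hx
      obtain ⟨b, hb, rfl⟩ := List.mem_map.mp hx
      rw [real_inner_comm]
      exact h.1 b hb
    simp only [List.map_cons, List.sum_cons, inner_add_left, inner_add_right]
    have := real_inner_comm a l.sum
    linarith

theorem mem_le_sum_norm (l : List V) (b : V) (hb : b ∈ l) :
    ⟪b, b⟫ ≤ (l.map (fun a => ⟪a, a⟫)).sum := by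
  apply List.single_le_sum
  · intro x hx
    obtain ⟨c, hc, rfl⟩ := List.mem_map.mp hx
    exact real_inner_self_nonneg
  · exact List.mem_map.mpr ⟨b, hb, rfl⟩

/-- Roots are primitive in the root lattice. -/
theorem RS.prim {Ψ : Set V} (h : RS Ψ) {g : V} (hg : g ∈ Ψ) (c : ℝ)
    (hc : c • g ∈ AddSubgroup.closure Ψ) : ∃ m : ℤ, c = m := by
  refine ⟨round c, ?_⟩
  by_contra hne
  have hd0 : c - round c ≠ 0 := sub_ne_zero.mpr hne
  have hd := abs_sub_round c
  set d := c - round c with hdd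
  have hdm : d • g ∈ AddSubgroup.closure Ψ := by
    rw [hdd, sub_smul]
    apply AddSubgroup.sub_mem _ hc
    rw [Int.cast_smul_eq_zsmul]
    exact AddSubgroup.zsmul_mem _ (AddSubgroup.subset_closure hg) _
  obtain ⟨l, hl, hs, hp⟩ := h.exists_list_nonneg hdm
  have pg := inner_pos' (h.ne_zero g hg)
  have hex : ∃ b ∈ l, ⟪b, g⟫ ≠ 0 := by
    by_contra! hcon
    have h1 : ⟪l.sum, g⟫ = 0 := by
      rw [inner_list_sum_left]
      apply List.sum_eq_zero
      intro x hx
      obtain ⟨b, hb, rfl⟩ := List.mem_map.mp hx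
      exact hcon b hb
    rw [hs, real_inner_smul_left] at h1
    rcases mul_eq_zero.mp h1 with h2 | h2
    · exact hd0 h2
    · linarith
  obtain ⟨b, hb, hbg⟩ := hex
  have h1 := list_sum_norm l hp
  have h2 := mem_le_sum_norm l b hb
  rw [hs, real_inner_smul_left, real_inner_smul_right] at h1
  have pb := inner_pos' (h.ne_zero b (hl b hb))
  have hd2 : d * d ≤ 1 / 4 := by
    have := abs_le.mp hd
    nlinarith
  have h3 : 4 * ⟪b, b⟫ ≤ ⟪g, g⟫ := by nlinarith
  obtain ⟨x, y, hx, hy, h4 | rfl | rfl⟩ := h.pair (hl b hb) hg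
  · -- 2⟪b,g⟫ = x ⟪g,g⟫ = y ⟪b,b⟫
    have hx0 : x ≠ 0 := by
      rintro rfl
      apply hbg; push_cast at hx; linarith
    have hsq : (x : ℝ) * x * ⟪g, g⟫ = (x * y) * ⟪b, b⟫ := by
      have : (x : ℝ) * ⟪g, g⟫ = y * ⟪b, b⟫ := by rw [← hx, ← hy]
      rw [mul_assoc, this]; ring
    have hx1 : (1 : ℝ) ≤ x * x := by
      have : 1 ≤ x * x := by
        have := mul_self_pos.mpr hx0
        omega
      exact_mod_cast this
    have h4' : (x : ℝ) * y ≤ 3 := by exact_mod_cast h4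
    nlinarith
  · linarith
  · simp only [inner_neg_neg] at h3; linarith

/-- Shortest roots in the lattice spanned by a subsystem belong to the subsystem. -/
theorem RS.short {Ψ : Set V} (h : RS Ψ) {g : V} (hg0 : g ≠ 0) (hg : g ∈ AddSubgroup.closure Ψ)
    (hmin : ∀ b ∈ Ψ, ⟪g, g⟫ ≤ ⟪b, b⟫) : g ∈ Ψ := by
  obtain ⟨l, hl, hs, hp⟩ := h.exists_list_nonneg hg
  have h1 := list_sum_norm l hp
  rw [hs] at h1
  have pg := inner_pos' hg0
  match l, hl, hs, h1 with
  | [], _, hs, _ => exact absurd hs.symm (by simpa using hg0)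
  | [a], hl, hs, _ => 
    have : a = g := by simpa using hs
    exact this ▸ hl a (by simp)
  | a :: b :: r, hl, hs, h1 =>
    exfalso
    have ha := hmin a (hl a (by simp))
    have hb := hmin b (hl b (by simp))
    have hr : 0 ≤ (r.map (fun a => ⟪a, a⟫)).sum := by
      apply List.sum_nonneg
      intro x hx
      obtain ⟨c, hc, rfl⟩ := List.mem_map.mp hx
      exact real_inner_self_nonneg
    simp only [List.map_cons, List.sum_cons] at h1
    linarith

/-- Linearization on `V × ℝ` of the affine reflection. -/
def lf (a : V) (k : ℝ) : (V × ℝ) →ₗ[ℝ] ℝ where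
  toFun x := ⟪x.1, a⟫ - k * x.2
  map_add' x y := by simp [inner_add_left]; ring
  map_smul' c x := by simp [real_inner_smul_left]; ring

theorem lf_apply (a : V) (k : ℝ) (x : V × ℝ) : lf a k x = ⟪x.1, a⟫ - k * x.2 := rfl

def S (a : V) (k : ℝ) : Module.End ℝ (V × ℝ) where
  toFun x := x - (lf a k x) • (coroot a, (0 : ℝ))
  map_add' x y := by rw [map_add, add_smul]; abel
  map_smul' c x := by
    rw [map_smul, smul_eq_mul, mul_smul, RingHom.id_apply, smul_sub]

theorem S_apply (a : V) (k : ℝ) (x : V × ℝ) :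
    S a k x = x - (lf a k x) • (coroot a, (0 : ℝ)) := rfl

theorem S_one (a : V) (k : ℝ) (v : V) : S a k (v, 1) = (sAff a k v, 1) := by
  rw [S_apply, lf_apply]
  show _ = (sAffFun a k v, (1 : ℝ))
  ext <;> simp [sAffFun]

theorem S_zero (a : V) (k : ℝ) (v : V) : S a k (v, 0) = (sAffFun a 0 v, 0) := by
  rw [S_apply, lf_apply]
  ext <;> simp [sAffFun]

theorem prod_S_one (l : List (V × ℝ)) (v : V) :
    (l.map (fun p => S p.1 p.2)).prod (v, 1) = ((l.map (fun p => sAff p.1 p.2)).prod v, 1) := by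
  induction l with
  | nil => simp
  | cons p l ih =>
    simp only [List.map_cons, List.prod_cons, Module.End.mul_apply, ih, S_one, Equiv.Perm.mul_apply]

theorem end_ext (A B : Module.End ℝ (V × ℝ)) (h : ∀ v, A (v, 1) = B (v, 1)) : A = B := by
  ext1
  · apply LinearMap.ext
    intro v
    have h1 := h v
    have h0 := h 0
    have e : ((v, 0) : V × ℝ) = (v, 1) - (0, 1) := by ext <;> simp
    simp only [LinearMap.comp_apply, LinearMap.inl_apply]
    rw [e, map_sub, map_sub, h1, h0]
  · apply LinearMap.ext
    intro c
    have e : ((0, c) : V × ℝ) = c • (0, 1) := by ext <;> simp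
    simp only [LinearMap.comp_apply, LinearMap.inr_apply]
    rw [e, map_smul, map_smul, h 0]

theorem sAff_inv (a : V) (k : ℝ) : (sAff a k)⁻¹ = sAff a k := by
  ext v; rfl

/-- Orbit transfer. -/
theorem orbit {Φ : Set V} {m : ℕ} (α : Fin m → V) (k : Fin m → ℤ)
    (hgen : Subgroup.closure (Set.range fun i => sAff (α i) (k i : ℝ)) = AffWeylGroup Φ)
    (Y : AddSubgroup V) (hY : ∀ i, ∀ y ∈ Y, sAffFun (α i) 0 y ∈ Y) (x : V × ℝ)
    (hx : ∀ i, lf (α i) (k i) x • coroot (α i) ∈ Y) (g : V) (hg : g ∈ Φ) (r : ℤ) :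
    lf g r x • coroot g ∈ Y := by
  let X : Set (V × ℝ) := {z | z.1 - x.1 ∈ Y ∧ z.2 = x.2}
  have hstep : ∀ i, ∀ z ∈ X, S (α i) (k i) z ∈ X := by
    intro i z hz
    have e : z = x + (z.1 - x.1, 0) := by ext <;> simp [hz.2]
    rw [e, map_add, S_zero, S_apply]
    refine ⟨?_, by simp⟩
    have h1 := hY i _ hz.1
    have h2 := hx i
    have : (x - lf (α i) (k i) x • (coroot (α i), (0 : ℝ)) + (sAffFun (α i) 0 (z.1 - x.1), 0)).1 - x.1
      = sAffFun (α i) 0 (z.1 - x.1) - lf (α i) (k i) x • coroot (α i) := by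
      simp; abel
    rw [this]
    exact Y.sub_mem h1 h2
  let p : Equiv.Perm V → Prop := fun w => ∃ A : Module.End ℝ (V × ℝ),
    (∀ v, A (v, 1) = (w v, 1)) ∧ ∀ z ∈ X, A z ∈ X
  have hall : ∀ w ∈ AffWeylGroup Φ, p w ∧ p w⁻¹ := by
    intro w hw
    rw [← hgen] at hw
    induction hw using Subgroup.closure_induction with
    | mem w hw =>
      obtain ⟨i, rfl⟩ := hw
      have : p (sAff (α i) (k i : ℝ)) := ⟨S (α i) (k i), S_one _ _, hstep i⟩
      exact ⟨this, by simpa only [sAff_inv] using this⟩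
    | one =>
      have : p 1 := ⟨1, by simp, by simp⟩
      exact ⟨this, by simpa using this⟩
    | mul a b _ _ ha hb =>
      have hmul : ∀ a b, p a → p b → p (a * b) := by
        rintro a b ⟨A, hA, hA'⟩ ⟨B, hB, hB'⟩
        exact ⟨A * B, fun v => by simp [Module.End.mul_apply, hA, hB],
          fun z hz => hA' _ (hB' _ hz)⟩
      exact ⟨hmul _ _ ha.1 hb.1, by rw [mul_inv_rev]; exact hmul _ _ hb.2 ha.2⟩
    | inv a _ ha => exact ⟨ha.2, by simpa using ha.1⟩
  obtain ⟨A, hA, hA'⟩ := (hall (sAff g r) (Subgroup.subset_closure ⟨g, hg, r, rfl⟩)).1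
  have hAS : A = S g r := end_ext _ _ (fun v => by rw [hA, S_one])
  have hxX : x ∈ X := ⟨by simp, rfl⟩
  have := (hA' x hxX).1
  rw [hAS, S_apply] at this
  simpa using this

section tri
variable {E ι : Type*} [AddCommGroup E] [Module ℝ E] (s : ι → Module.End ℝ E) (a : ι → E)

theorem stepH (E0 H : AddSubgroup E)
    (h1 : ∀ i, ∀ x ∈ E0, s i x ∈ E0 ∧ ∃ z : ℤ, x - s i x = z • a i)
    (l : List ι) (hl : ∀ i ∈ l, a i ∈ H) (x : E) (hx : x ∈ E0) :
    x - (l.map s).prod x ∈ H ∧ (l.map s).prod x ∈ E0 := by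
  induction l with
  | nil => simpa using hx
  | cons i l ih =>
    obtain ⟨h2, h3⟩ := ih (fun j hj => hl j (by simp [hj]))
    obtain ⟨h4, z, hz⟩ := h1 i _ h3
    simp only [List.map_cons, List.prod_cons, Module.End.mul_apply]
    refine ⟨?_, h4⟩
    have : x - s i ((l.map s).prod x) = (x - (l.map s).prod x) +
      ((l.map s).prod x - s i ((l.map s).prod x)) := by abel
    rw [this, hz]
    exact H.add_mem h2 (H.zsmul_mem (hl i (by simp)) _)

theorem stepQ (Q : AddSubgroup E) (h2 : ∀ i, ∀ x ∈ Q, s i x ∈ Q) (l : List ι) (x : E)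
    (hx : ∀ i ∈ l, x - s i x ∈ Q) : x - (l.map s).prod x ∈ Q := by
  induction l with
  | nil => simp
  | cons i l ih =>
    have h3 := ih (fun j hj => hx j (by simp [hj]))
    simp only [List.map_cons, List.prod_cons, Module.End.mul_apply]
    have : x - s i ((l.map s).prod x) = (x - s i x) + s i (x - (l.map s).prod x) := by
      rw [map_sub]; abel
    rw [this]
    exact Q.add_mem (hx i (by simp)) (h2 i _ h3)

theorem tri (E0 Q H : AddSubgroup E) (hQH : Q ≤ H)
    (h1 : ∀ i, ∀ x ∈ E0, s i x ∈ E0 ∧ ∃ z : ℤ, x - s i x = z • a i)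
    (h2 : ∀ i, ∀ x ∈ Q, s i x ∈ Q) (l : List ι) (hnd : l.Nodup)
    (h3 : ∀ j, a j ∈ Q ∨ ∃ x ∈ E0, x - (l.map s).prod x ∈ H ∧ (∀ i, i ≠ j → x - s i x ∈ Q) ∧
      x - s j x - a j ∈ Q) : ∀ j ∈ l, a j ∈ H := by
  suffices ∀ l1 l2, l1 ++ l2 = l → ∀ i ∈ l1, a i ∈ H from this l [] (by simp)
  intro l1
  induction l1 using List.reverseRecOn with
  | nil => simp
  | append_singleton l1 j ih =>
    intro l2 hl
    have ih' := ih (j :: l2) (by rw [← hl]; simp)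
    intro i hi
    rcases List.mem_append.mp hi with hi | hi
    · exact ih' i hi
    obtain rfl : i = j := by simpa using hi
    rcases h3 i with h4 | ⟨x, hx, hxH, hne, hj⟩
    · exact hQH h4
    have hnot : ∀ t ∈ l2, t ≠ i := by
      rintro t ht rfl
      rw [← hl] at hnd
      simp [List.nodup_append] at hnd
      tauto
    have hq := stepQ s Q h2 l2 x (fun t ht => hne t (hnot t ht))
    have hall : ∀ l : List ι, ∀ x ∈ E0, (l.map s).prod x ∈ E0 := by
      intro l
      induction l with
      | nil => intro x hx; simpa using hx
      | cons t l ihl =>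
        intro x hx
        simp only [List.map_cons, List.prod_cons, Module.End.mul_apply]
        exact (h1 t _ (ihl x hx)).1
    set y2 := (l2.map s).prod x with hy2
    have hy2E : y2 ∈ E0 := hall l2 x hx
    have hy1E : s i y2 ∈ E0 := (h1 i _ hy2E).1
    have h5 := (stepH s a E0 H h1 l1 ih' _ hy1E).1
    have e : (l.map s).prod x = (l1.map s).prod (s i y2) := by
      rw [← hl]; simp [hy2, Module.End.mul_apply]
    rw [e] at hxH
    have h6 : s i (x - y2) ∈ Q := h2 i _ hq
    have : a i = (x - (l1.map s).prod (s i y2)) - (s i y2 - (l1.map s).prod (s i y2))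
        - s i (x - y2) - (x - s i x - a i) := by
      rw [map_sub]; abel
    rw [this]
    exact H.sub_mem (H.sub_mem (H.sub_mem hxH h5) (hQH h6)) (hQH hj)
end tri

theorem exists_nonorth {Φ : Set V} (hΦ : RS Φ) (hirr : IsIrreducibleRS Φ) {a b : V}
    (ha : a ∈ Φ) (hb : b ∈ Φ) : ∃ a' ∈ Φ, ⟪a', a'⟫ = ⟪a, a⟫ ∧ ⟪a', b⟫ ≠ 0 := by
  let Φ₁ : Set V := {g | g ∈ Φ ∧ ∃ a' ∈ Φ, ⟪a', a'⟫ = ⟪a, a⟫ ∧ ⟪a', g⟫ ≠ 0}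
  have h1 : a ∈ Φ₁ := ⟨ha, a, ha, rfl, (inner_pos' (hΦ.ne_zero a ha)).ne'⟩
  rcases hirr Φ₁ (Φ \ Φ₁) (by
      rw [Set.union_sdiff_self]; exact Set.union_eq_self_of_subset_left (fun x hx => hx.1)) (by
      rintro g ⟨hg, a', ha', hn, hag⟩ d ⟨hd, hd1⟩
      by_contra hgd
      have had : ⟪a', d⟫ = 0 := by
        by_contra hc
        exact hd1 ⟨hd, a', ha', hn, hc⟩
      have h0 := hΦ.ne_zero g hg
      apply hd1
      refine ⟨hd, sAffFun g 0 a', hΦ.refl_mem g hg a' ha', ?_, ?_⟩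
      · rw [rf_inner g a' a' h0, hn]
      · rw [rf_apply, inner_sub_left, had, real_inner_smul_left, zero_sub]
        have := (inner_pos' h0).ne'
        rw [neg_ne_zero]
        exact mul_ne_zero (div_ne_zero (mul_ne_zero two_ne_zero hag) this) hgd) with h | h
  · rw [h] at h1; exact absurd h1 (by simp)
  · by_contra hcon
    have : b ∈ Φ \ Φ₁ := ⟨hb, fun hb1 => hcon hb1.2⟩
    rw [h] at this
    exact this

/-- ratio of lengths of nonorthogonal roots. -/
theorem pair_ratio {Φ : Set V} (hΦ : RS Φ) {a b : V} (ha : a ∈ Φ) (hb : b ∈ Φ)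
    (hlt : ⟪a, a⟫ < ⟪b, b⟫) (hne : ⟪a, b⟫ ≠ 0) :
    ∃ q : ℤ, (q = 2 ∨ q = 3) ∧ ⟪b, b⟫ = q * ⟪a, a⟫ ∧
      (2 * ⟪a, b⟫ = q * ⟪a, a⟫ ∨ 2 * ⟪a, b⟫ = -(q * ⟪a, a⟫)) := by
  have pa := inner_pos' (hΦ.ne_zero a ha)
  have pb := inner_pos' (hΦ.ne_zero b hb)
  obtain ⟨x, y, hx, hy, h4 | rfl | rfl⟩ := hΦ.pair ha hb
  · have hx0 : x ≠ 0 := by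
      rintro rfl
      apply hne; push_cast at hx; linarith
    have hxy : (x : ℝ) * ⟪b, b⟫ = y * ⟪a, a⟫ := by rw [← hx, ← hy]
    rcases lt_or_gt_of_ne hx0 with hneg | hpos
    · have hneg' : (x : ℝ) < 0 := by exact_mod_cast hneg
      have : (y : ℝ) < x := by
        by_contra! hc
        nlinarith
      have hyx : y < x := by exact_mod_cast this
      have hx1 : x = -1 := by
        by_contra hc
        have : x ≤ -2 := by omega
        nlinarith
      subst hx1
      refine ⟨-y, by omega, ?_, ?_⟩
      · push_cast at hxy ⊢; linarith
      · right; push_cast; linarith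
    · have hpos' : (0 : ℝ) < x := by exact_mod_cast hpos
      have : (x : ℝ) < y := by
        by_contra! hc
        nlinarith
      have hyx : x < y := by exact_mod_cast this
      have hx1 : x = 1 := by
        by_contra hc
        have : 2 ≤ x := by omega
        nlinarith
      subst hx1
      refine ⟨y, by omega, ?_, ?_⟩
      · push_cast at hxy ⊢; linarith
      · left; linarith
  · exact absurd hlt (lt_irrefl _)
  · rw [inner_neg_neg] at hlt; exact absurd hlt (lt_irrefl _)

theorem toRS {Φ : Set V} (h : IsCrystRootSystem Φ) : RS Φ :=
  ⟨h.ne_zero, h.refl_mem, h.reduced, h.cryst⟩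

theorem smul_closure {Ψ : Set V} {c : ℝ} (hc : c ≠ 0) {v : V}
    (hv : v ∈ AddSubgroup.closure {u | ∃ b ∈ Ψ, u = c • b}) :
    c⁻¹ • v ∈ AddSubgroup.closure Ψ := by
  induction hv using AddSubgroup.closure_induction with
  | mem v hv =>
    obtain ⟨b, hb, rfl⟩ := hv
    rw [smul_smul, inv_mul_cancel₀ hc, one_smul]
    exact AddSubgroup.subset_closure hb
  | zero => simp
  | add x y _ _ hx hy => rw [smul_add]; exact add_mem hx hy
  | neg x _ hx => rw [smul_neg]; exact neg_mem hx

theorem rf_closure {Ψ : Set V} (a : V) (h : ∀ v ∈ Ψ, sAffFun a 0 v ∈ Ψ) (v : V)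
    (hv : v ∈ AddSubgroup.closure Ψ) : sAffFun a 0 v ∈ AddSubgroup.closure Ψ := by
  induction hv using AddSubgroup.closure_induction with
  | mem v hv => exact AddSubgroup.subset_closure (h v hv)
  | zero => simp [sAffFun]
  | add x y _ _ hx hy => rw [rf_add]; exact add_mem hx hy
  | neg x _ hx =>
    have : sAffFun a 0 (-x) = - sAffFun a 0 x := by
      rw [← neg_one_smul ℝ x, rf_smul, neg_one_smul]
    rw [this]; exact neg_mem hx

theorem RS.coroot_int {Φ : Set V} (h : RS Φ) {a b : V} (ha : a ∈ Φ) (hb : b ∈ Φ) :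
    ∃ z : ℤ, ⟪coroot a, b⟫ = z := by
  obtain ⟨z, hz⟩ := h.cryst a ha b hb
  refine ⟨z, ?_⟩
  rw [← hz, coroot, real_inner_smul_left, real_inner_comm b a]; ring

theorem RS.lattice_int {Φ : Set V} (h : RS Φ) {v b : V}
    (hv : v ∈ AddSubgroup.closure (coroot '' Φ)) (hb : b ∈ Φ) : ∃ z : ℤ, ⟪v, b⟫ = z := by
  induction hv using AddSubgroup.closure_induction with
  | mem v hv => obtain ⟨a, ha, rfl⟩ := hv; exact h.coroot_int ha hb
  | zero => exact ⟨0, by simp⟩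
  | add x y _ _ hx hy =>
    obtain ⟨z, hz⟩ := hx
    obtain ⟨z', hz'⟩ := hy
    exact ⟨z + z', by rw [inner_add_left, hz, hz']; push_cast; ring⟩
  | neg x _ hx =>
    obtain ⟨z, hz⟩ := hx
    exact ⟨-z, by rw [inner_neg_left, hz]; push_cast; ring⟩

/-- The integral points `P^∨ ⊕ ℤ`. -/
def intPts (Φ : Set V) : AddSubgroup (V × ℝ) where
  carrier := {x | ∀ g ∈ Φ, ∀ r : ℤ, ∃ z : ℤ, lf g r x = z}
  zero_mem' := fun g _ r => ⟨0, by simp⟩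
  add_mem' := by
    intro x y hx hy g hg r
    obtain ⟨z, hz⟩ := hx g hg r
    obtain ⟨z', hz'⟩ := hy g hg r
    exact ⟨z + z', by rw [map_add, hz, hz']; push_cast; ring⟩
  neg_mem' := by
    intro x hx g hg r
    obtain ⟨z, hz⟩ := hx g hg r
    exact ⟨-z, by rw [map_neg, hz]; push_cast; ring⟩

/-- Scaled weights, in `V × 0`. -/
def wtPts (Φ : Set V) (σ : ℝ) : AddSubgroup (V × ℝ) where
  carrier := {x | x.2 = 0 ∧ ∀ g ∈ Φ, ∃ z : ℤ, ⟪x.1, g⟫ = z * (⟪g, g⟫ / σ)}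
  zero_mem' := ⟨rfl, fun g _ => ⟨0, by simp⟩⟩
  add_mem' := by
    rintro x y ⟨hx0, hx⟩ ⟨hy0, hy⟩
    refine ⟨by simp [hx0, hy0], fun g hg => ?_⟩
    obtain ⟨z, hz⟩ := hx g hg
    obtain ⟨z', hz'⟩ := hy g hg
    exact ⟨z + z', by rw [Prod.fst_add, inner_add_left, hz, hz']; push_cast; ring⟩
  neg_mem' := by
    rintro x ⟨hx0, hx⟩
    refine ⟨by simp [hx0], fun g hg => ?_⟩
    obtain ⟨z, hz⟩ := hx g hg
    exact ⟨-z, by rw [Prod.fst_neg, inner_neg_left, hz]; push_cast; ring⟩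

theorem intPts_step {Φ : Set V} (h : RS Φ) {a : V} (ha : a ∈ Φ) (k : ℤ) (x : V × ℝ)
    (hx : x ∈ intPts Φ) :
    S a k x ∈ intPts Φ ∧ ∃ z : ℤ, x - S a k x = z • ((coroot a, 0) : V × ℝ) := by
  obtain ⟨z, hz⟩ := hx a ha k
  constructor
  · intro g hg r
    obtain ⟨z1, hz1⟩ := hx g hg r
    obtain ⟨z2, hz2⟩ := h.coroot_int ha hg
    refine ⟨z1 - z * z2, ?_⟩
    rw [S_apply, map_sub, map_smul, hz, hz1, lf_apply, hz2]
    simp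
  · refine ⟨z, ?_⟩
    rw [S_apply, sub_sub_cancel, hz, Int.cast_smul_eq_zsmul]

theorem wtPts_step {Φ : Set V} (h : RS Φ) {σ : ℝ} (hσ : 0 < σ) {a : V} (ha : a ∈ Φ) (k : ℝ)
    (x : V × ℝ) (hx : x ∈ wtPts Φ σ) :
    S a k x ∈ wtPts Φ σ ∧ ∃ z : ℤ, x - S a k x = z • (((2 / σ) • a, 0) : V × ℝ) := by
  obtain ⟨v, c⟩ := x
  obtain ⟨h0, hx⟩ := hx
  obtain rfl : c = 0 := h0
  have h0 := h.ne_zero a ha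
  have pa := (inner_pos' h0).ne'
  rw [S_zero]
  constructor
  · refine ⟨rfl, fun g hg => ?_⟩
    obtain ⟨z, hz⟩ := hx _ (h.refl_mem a ha g hg)
    refine ⟨z, ?_⟩
    rw [rf_inner a g g h0] at hz
    show ⟪sAffFun a 0 v, g⟫ = _
    rw [rf_inner_left, hz]
  · obtain ⟨z, hz⟩ := hx a ha
    refine ⟨z, ?_⟩
    have hz' : ⟪v, a⟫ = z * (⟪a, a⟫ / σ) := hz
    ext
    · simp only [Prod.fst_sub, Prod.smul_fst, rf_apply, sub_sub_cancel, hz']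
      rw [← Int.cast_smul_eq_zsmul ℝ, smul_smul]
      congr 1
      field_simp
    · simp

theorem main (Φ : Set V) (hΦ : IsCrystRootSystem Φ) (hirr : IsIrreducibleRS Φ)
    (n : ℕ) (hrank : Module.finrank ℝ V = n)
    (α : Fin (n + 1) → V) (hα : ∀ i, α i ∈ Φ) (m : Fin (n + 1) → ℤ)
    (hgen : Subgroup.closure (Set.range fun i => sAff (α i) (m i : ℝ)) = AffWeylGroup Φ)
    (β : Fin (n + 1) → V) (hβ : ∀ i, β i ∈ Φ) (k : Fin (n + 1) → ℤ)
    (hfac : (List.ofFn fun i => sAff (α i) (m i : ℝ)).prod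
      = (List.ofFn fun i => sAff (β i) (k i : ℝ)).prod) :
    Subgroup.closure (Set.range fun i => sAff (β i) 0) = WeylGroup Φ := by
  have hR := toRS hΦ
  have hfd : FiniteDimensional ℝ V := by
    refine ⟨⟨hΦ.finite.toFinset, ?_⟩⟩
    simpa using hΦ.spanning
  -- equality of the linearized products
  have hprod : ((List.finRange (n + 1)).map fun i => S (α i) (m i : ℝ)).prod
      = ((List.finRange (n + 1)).map fun i => S (β i) (k i : ℝ)).prod := by
    have key : ∀ (a : Fin (n + 1) → V) (k : Fin (n + 1) → ℤ) (v : V),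
        ((List.finRange (n + 1)).map fun i => S (a i) (k i : ℝ)).prod (v, 1)
          = ((List.ofFn fun i => sAff (a i) (k i : ℝ)).prod v, 1) := by
      intro a k v
      have := prod_S_one ((List.finRange (n + 1)).map fun i => (a i, (k i : ℝ))) v
      rw [List.map_map, List.map_map] at this
      rw [List.ofFn_eq_map]
      exact this
    apply end_ext
    intro v
    rw [key, key, hfac]
  -- the affine roots are linearly independent and dual basis
  have hinj : ∀ x : V × ℝ, (∀ i, lf (α i) (m i) x = 0) → x = 0 := by
    intro x hx
    have h1 := orbit α m hgen ⊥ (by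
      intro i y hy
      rw [AddSubgroup.mem_bot] at hy ⊢
      rw [hy]; simp [sAffFun]) x (by
      intro i; rw [hx i, zero_smul]; exact AddSubgroup.zero_mem _)
    have h2 : ∀ g ∈ Φ, ∀ r : ℤ, lf g r x = 0 := by
      intro g hg r
      have := h1 g hg r
      rw [AddSubgroup.mem_bot] at this
      exact (smul_eq_zero.mp this).resolve_right (coroot_ne_zero (hR.ne_zero g hg))
    obtain ⟨g0, hg0⟩ := hΦ.nonempty
    have hx2 : x.2 = 0 := by
      have e0 := h2 g0 hg0 0
      have e1 := h2 g0 hg0 1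
      rw [lf_apply] at e0 e1
      push_cast at e0 e1
      linarith
    have hx1 : x.1 = 0 := by
      have : x.1 ∈ (Submodule.span ℝ Φ)ᗮ := by
        rw [Submodule.mem_orthogonal']
        intro u hu
        induction hu using Submodule.span_induction with
        | mem g hg =>
          have e0 := h2 g hg 0
          rw [lf_apply] at e0
          push_cast at e0
          linarith
        | zero => simp
        | add a b _ _ ha hb => rw [inner_add_right, ha, hb, add_zero]
        | smul c a _ ha => rw [inner_smul_right, ha, mul_zero]
      rw [hΦ.spanning, Submodule.top_orthogonal_eq_bot] at this
      simpa using this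
    ext <;> simp [hx1, hx2]
  have hdual : ∀ j, ∃ x : V × ℝ, ∀ i, lf (α i) (m i) x = if i = j then 1 else 0 := by
    let F : (V × ℝ) →ₗ[ℝ] (Fin (n + 1) → ℝ) := LinearMap.pi fun i => lf (α i) (m i)
    have hF : Function.Injective F := by
      rw [← LinearMap.ker_eq_bot, LinearMap.ker_eq_bot']
      intro x hx
      exact hinj x (fun i => congrFun hx i)
    have hF' : Function.Surjective F := by
      rwa [← LinearMap.injective_iff_surjective_of_finrank_eq_finrank]
      simp [hrank]
    intro j
    obtain ⟨x, hx⟩ := hF' (fun i => if i = j then 1 else 0)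
    exact ⟨x, fun i => congrFun hx i⟩
  choose x hx using hdual
  have hxint : ∀ j, x j ∈ intPts Φ := by
    intro j g hg r
    have h1 := orbit α m hgen (AddSubgroup.closure (coroot '' Φ)) (by
      intro i y hy
      apply rf_closure _ _ y hy
      rintro _ ⟨b, hb, rfl⟩
      rw [← coroot_rf _ _ (hR.ne_zero _ (hα i))]
      exact ⟨_, hR.refl_mem _ (hα i) b hb, rfl⟩) (x j) (by
      intro i
      rw [hx j i]
      split_ifs
      · rw [one_smul]; exact AddSubgroup.subset_closure ⟨_, hα i, rfl⟩
      · rw [zero_smul]; exact zero_mem _) g hg r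
    exact hR.coroots.prim ⟨g, hg, rfl⟩ _ h1
  -- the subsystem
  set W' := Subgroup.closure (Set.range fun i => sAff (β i) 0) with hW'
  let Φ' : Set V := {g | g ∈ Φ ∧ sAff g 0 ∈ W'}
  have hsub : Φ' ⊆ Φ := fun g hg => hg.1
  have hβ' : ∀ i, β i ∈ Φ' := fun i => ⟨hβ i, Subgroup.subset_closure ⟨i, rfl⟩⟩
  have hR' : RS Φ' := by
    refine ⟨fun a ha => hR.ne_zero a ha.1, ?_, fun a ha c hc => hR.reduced a ha.1 c hc.1,
      fun a ha b hb => hR.cryst a ha.1 b hb.1⟩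
    intro a ha b hb
    refine ⟨hR.refl_mem a ha.1 b hb.1, ?_⟩
    have h0 := hR.ne_zero a ha.1
    have : sAff (sAffFun a 0 b) 0 = sAff a 0 * sAff b 0 * sAff a 0 := by
      ext v
      show sAffFun (sAffFun a 0 b) 0 v = sAffFun a 0 (sAffFun b 0 (sAffFun a 0 v))
      conv_rhs => rw [sAffFun.eq_def b, sub_zero, sub_eq_add_neg, ← neg_smul, rf_add, rf_smul,
        sAffFun_involutive a 0 v, ← coroot_rf a b h0, rf_inner_left]
      rw [sAffFun.eq_def _ _ v, sub_zero, neg_smul, sub_eq_add_neg]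
    rw [this]
    exact W'.mul_mem (W'.mul_mem ha.2 hb.2) ha.2
  suffices hfin : Φ ⊆ Φ' by
    apply le_antisymm
    · rw [hW', Subgroup.closure_le]
      rintro _ ⟨i, rfl⟩
      exact Subgroup.subset_closure ⟨β i, hβ i, rfl⟩
    · rw [WeylGroup, Subgroup.closure_le]
      rintro _ ⟨g, hg, rfl⟩
      exact (hfin hg).2
  -- coroot lattice
  have hM : ∀ i, coroot (α i) ∈ AddSubgroup.closure (coroot '' Φ') := by
    intro i
    have := tri (fun i => S (α i) (m i : ℝ)) (fun i => ((coroot (α i), 0) : V × ℝ)) (intPts Φ) ⊥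
      ((AddSubgroup.closure (coroot '' Φ')).prod ⊥) bot_le
      (fun i y hy => intPts_step hR (hα i) (m i) y hy)
      (by intro i y hy; rw [AddSubgroup.mem_bot] at hy ⊢; rw [hy, map_zero])
      (List.finRange (n + 1)) (List.nodup_finRange _)
      (by
        intro j
        right
        refine ⟨x j, hxint j, ?_, ?_, ?_⟩
        · rw [hprod]
          exact (stepH (fun i => S (β i) (k i : ℝ)) (fun i => ((coroot (β i), 0) : V × ℝ))
            (intPts Φ) ((AddSubgroup.closure (coroot '' Φ')).prod ⊥)
            (fun i y hy => intPts_step hR (hβ i) (k i) y hy) _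
            (fun i _ => ⟨AddSubgroup.subset_closure ⟨_, hβ' i, rfl⟩, by simp⟩) _ (hxint j)).1
        · intro i hij
          rw [S_apply, hx j i, if_neg hij]; simp
        · rw [S_apply, hx j j, if_pos rfl]; simp)
      i (List.mem_finRange i)
    exact this.1
  have hM2 : ∀ g ∈ Φ, coroot g ∈ AddSubgroup.closure (coroot '' Φ') := by
    intro g hg
    have h1 := orbit α m hgen (AddSubgroup.closure (Set.range fun i => coroot (α i))) (by
      intro i y hy
      have hy' : y ∈ AddSubgroup.closure (coroot '' Φ) := by
        refine AddSubgroup.closure_mono ?_ hy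
        rintro _ ⟨i, rfl⟩
        exact ⟨_, hα i, rfl⟩
      obtain ⟨z, hz⟩ := hR.lattice_int hy' (hα i)
      rw [sAffFun, hz, sub_zero, Int.cast_smul_eq_zsmul]
      exact sub_mem hy (zsmul_mem (AddSubgroup.subset_closure (Set.mem_range_self (f := fun i => coroot (α i)) i)) _)) (0, 1) (by
      intro i
      have : lf (α i) (m i) ((0, 1) : V × ℝ) = ((-m i : ℤ) : ℝ) := by simp [lf_apply]
      rw [this, Int.cast_smul_eq_zsmul]
      exact zsmul_mem (AddSubgroup.subset_closure (Set.mem_range_self (f := fun i => coroot (α i)) i)) _) g hg (-1)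
    have e : lf g ((-1 : ℤ) : ℝ) ((0, 1) : V × ℝ) = 1 := by simp [lf_apply]
    rw [e, one_smul] at h1
    refine (AddSubgroup.closure_le _).mpr ?_ h1
    rintro _ ⟨i, rfl⟩
    exact hM i
  -- longest roots
  obtain ⟨b0, hb0, hmax⟩ := Set.exists_max_image Φ (fun g => ⟪g, g⟫) hΦ.finite hΦ.nonempty
  have hlong : ∀ g ∈ Φ, ⟪g, g⟫ = ⟪b0, b0⟫ → g ∈ Φ' := by
    intro g hg hgl
    have h0 := hR.ne_zero g hg
    obtain ⟨d, hd, hdg⟩ := hR'.coroots.short (coroot_ne_zero h0) (hM2 g hg) (by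
      rintro _ ⟨d, hd, rfl⟩
      have hd0 := hR.ne_zero d (hsub hd)
      rw [inner_coroot_self h0, inner_coroot_self hd0, hgl]
      exact div_le_div_of_nonneg_left (by norm_num) (inner_pos' hd0) (hmax d (hsub hd)))
    rw [← coroot_coroot h0, ← hdg, coroot_coroot (hR.ne_zero d (hsub hd))]
    exact hd
  intro g hg
  by_cases hgl : ⟪g, g⟫ = ⟪b0, b0⟫
  · exact hlong g hg hgl
  -- there are two root lengths
  have hratio : ∀ d ∈ Φ, ⟪d, d⟫ ≠ ⟪b0, b0⟫ → ∃ b ∈ Φ, ⟪b, b⟫ = ⟪b0, b0⟫ ∧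
      ∃ q : ℤ, (q = 2 ∨ q = 3) ∧ ⟪b, b⟫ = q * ⟪d, d⟫ ∧
      (2 * ⟪d, b⟫ = q * ⟪d, d⟫ ∨ 2 * ⟪d, b⟫ = -(q * ⟪d, d⟫)) := by
    intro d hd hdl
    obtain ⟨b, hb, hbl, hbd⟩ := exists_nonorth hR hirr hb0 hd
    refine ⟨b, hb, hbl, pair_ratio hR hd hb ?_ ?_⟩
    · rw [hbl]; exact lt_of_le_of_ne (hmax d hd) hdl
    · rwa [real_inner_comm]
  obtain ⟨b1, hb1, hb1l, q, hq, hbq, -⟩ := hratio g hg hgl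
  set σ := ⟪g, g⟫ with hσdef
  have hσ : 0 < σ := inner_pos' (hR.ne_zero g hg)
  have hℓ : ⟪b0, b0⟫ = q * σ := by rw [← hb1l, hbq]
  have hq0 : (0 : ℝ) < q := by rcases hq with rfl | rfl <;> norm_num
  have hq1 : (1 : ℝ) < q := by rcases hq with rfl | rfl <;> norm_num
  have htwo : ∀ d ∈ Φ, ⟪d, d⟫ ≠ ⟪b0, b0⟫ → ⟪d, d⟫ = σ := by
    intro d hd hdl
    obtain ⟨b, hb, hbl, q', hq', hbq', -⟩ := hratio d hd hdl
    rw [hbl, hℓ] at hbq'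
    by_contra hne
    have pd := inner_pos' (hR.ne_zero d hd)
    rcases lt_or_gt_of_ne hne with hlt | hgt
    · obtain ⟨e, he, hel, heg⟩ := exists_nonorth hR hirr hd hg
      obtain ⟨p, hp, hp', -⟩ := pair_ratio hR he hg (by rw [hel]; exact hlt) heg
      rw [hel, ← hσdef] at hp'
      rcases hq with rfl | rfl <;> rcases hq' with rfl | rfl <;> rcases hp with rfl | rfl <;>
        push_cast at * <;> linarith
    · obtain ⟨e, he, hel, heg⟩ := exists_nonorth hR hirr hg hd
      obtain ⟨p, hp, hp', -⟩ := pair_ratio hR he hd (by rw [hel]; exact hgt) heg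
      rw [hel] at hp'
      rcases hq with rfl | rfl <;> rcases hq' with rfl | rfl <;> rcases hp with rfl | rfl <;>
        push_cast at * <;> linarith
  have hσ2 : (2 / σ) ≠ 0 := by positivity
  have hcor : ∀ d ∈ Φ, ⟪d, d⟫ = σ → coroot d = (2 / σ) • d := by
    intro d _ hd; rw [coroot, hd]
  -- the long lattice
  let QL : AddSubgroup V := AddSubgroup.closure
    {u | ∃ b ∈ {b | b ∈ Φ ∧ ⟪b, b⟫ = ⟪b0, b0⟫}, u = (2 / σ) • b}
  have hqQ : ∀ d ∈ Φ, (q : ℝ) • coroot d ∈ QL := by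
    intro d hd
    by_cases hdl : ⟪d, d⟫ = ⟪b0, b0⟫
    · have : (q : ℝ) • coroot d = (2 / σ) • d := by
        rw [coroot, hdl, hℓ, smul_smul]; congr 1; field_simp
      rw [this]
      exact AddSubgroup.subset_closure ⟨d, ⟨hd, hdl⟩, rfl⟩
    · have hds := htwo d hd hdl
      obtain ⟨b, hb, hbl, q', -, hbq', hpm⟩ := hratio d hd hdl
      have hd0 := hR.ne_zero d hd
      have hqq : (q' : ℝ) * σ = q * σ := by rw [← hds, ← hbq', hbl, hℓ, hds]
      have hqq' : (q' : ℝ) = q := mul_right_cancel₀ hσ.ne' hqq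
      rw [hds, hqq'] at hpm
      have m1 : (2 / σ) • b ∈ QL := AddSubgroup.subset_closure ⟨b, ⟨hb, hbl⟩, rfl⟩
      have m2 : (2 / σ) • sAffFun d 0 b ∈ QL := AddSubgroup.subset_closure
        ⟨_, ⟨hR.refl_mem d hd b hb, by rw [rf_inner d b b hd0, hbl]⟩, rfl⟩
      have e : (2 / σ) • b - (2 / σ) • sAffFun d 0 b = (2 * ⟪d, b⟫ / σ) • coroot d := by
        rw [hcor d hd hds, rf_apply, hds, real_inner_comm, smul_sub, sub_sub_cancel, smul_comm]
      have m3 := QL.sub_mem m1 m2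
      rw [e] at m3
      rcases hpm with h1 | h1
      · rw [h1, mul_div_assoc, div_self hσ.ne', mul_one] at m3; exact m3
      · rw [h1, neg_div, mul_div_assoc, div_self hσ.ne', mul_one, neg_smul] at m3
        exact neg_mem_iff.mp m3
  -- scaled root lattice integrality of dual vectors of short roots
  have hxs : ∀ j, ⟪α j, α j⟫ = σ → ∀ d ∈ Φ, ∀ r : ℤ, ∃ z : ℤ,
      lf d r (x j) = z * (⟪d, d⟫ / σ) := by
    intro j hj d hd r
    have h1 := orbit α m hgen (AddSubgroup.closure {u | ∃ b ∈ Φ, u = (2 / σ) • b}) (by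
      intro i y hy
      apply rf_closure _ _ y hy
      rintro _ ⟨b, hb, rfl⟩
      rw [rf_smul]
      exact ⟨_, hR.refl_mem _ (hα i) b hb, rfl⟩) (x j) (by
      intro i
      rw [hx j i]
      split_ifs with hij
      · subst hij
        rw [one_smul, hcor _ (hα i) hj]; exact AddSubgroup.subset_closure ⟨_, hα i, rfl⟩
      · rw [zero_smul]; exact zero_mem _) d hd r
    have pd := (inner_pos' (hR.ne_zero d hd)).ne'
    have h2 := smul_closure hσ2 h1
    rw [coroot, smul_smul, smul_smul] at h2
    obtain ⟨z, hz⟩ := hR.prim hd _ h2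
    refine ⟨z, ?_⟩
    rw [← hz]
    field_simp
  -- root lattice
  have hN : ∀ i, α i ∈ AddSubgroup.closure Φ' := by
    intro i
    have := tri (fun i => S (α i) (m i : ℝ)) (fun i => (((2 / σ) • α i, 0) : V × ℝ)) (wtPts Φ σ)
      (QL.prod ⊥) ((AddSubgroup.closure {u | ∃ b ∈ Φ', u = (2 / σ) • b}).prod ⊥)
      (by
        apply AddSubgroup.prod_mono _ le_rfl
        apply AddSubgroup.closure_mono
        rintro _ ⟨b, ⟨hb, hbl⟩, rfl⟩
        exact ⟨b, hlong b hb hbl, rfl⟩)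
      (fun i y hy => wtPts_step hR hσ (hα i) (m i) y hy)
      (by
        rintro i ⟨v, c⟩ ⟨hv, hc⟩
        obtain rfl : c = 0 := by simpa using hc
        rw [S_zero]
        refine ⟨rf_closure _ ?_ v hv, by simp⟩
        rintro _ ⟨b, ⟨hb, hbl⟩, rfl⟩
        rw [rf_smul]
        exact ⟨_, ⟨hR.refl_mem _ (hα i) b hb,
          by rw [rf_inner _ b b (hR.ne_zero _ (hα i)), hbl]⟩, rfl⟩)
      (List.finRange (n + 1)) (List.nodup_finRange _)
      (by
        intro j
        by_cases hjl : ⟪α j, α j⟫ = ⟪b0, b0⟫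
        · left
          exact ⟨AddSubgroup.subset_closure ⟨_, ⟨hα j, hjl⟩, rfl⟩, by simp⟩
        have hj := htwo _ (hα j) hjl
        right
        have hv : (((x j).1, 0) : V × ℝ) ∈ wtPts Φ σ := by
          refine ⟨rfl, fun d hd => ?_⟩
          obtain ⟨z, hz⟩ := hxs j hj d hd 0
          refine ⟨z, ?_⟩
          rw [← hz, lf_apply]; simp
        obtain ⟨c, hc⟩ : ∃ c : ℤ, (x j).2 = q * c := by
          obtain ⟨z0, hz0⟩ := hxs j hj b0 hb0 0
          obtain ⟨z1, hz1⟩ := hxs j hj b0 hb0 1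
          refine ⟨z0 - z1, ?_⟩
          rw [lf_apply, hℓ, mul_div_assoc, div_self hσ.ne'] at hz0 hz1
          push_cast at *
          linarith
        have hmem : ∀ i, ((m i : ℝ) * (x j).2) • coroot (α i) ∈ QL := by
          intro i
          have : ((m i : ℝ) * (x j).2) • coroot (α i) = (m i * c) • ((q : ℝ) • coroot (α i)) := by
            rw [← Int.cast_smul_eq_zsmul ℝ, smul_smul, hc]; congr 1; push_cast; ring
          rw [this]
          exact zsmul_mem (hqQ _ (hα i)) _
        have hlf : ∀ i, lf (α i) (m i) (((x j).1, 0) : V × ℝ)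
            = (if i = j then 1 else 0) + m i * (x j).2 := by
          intro i
          rw [← hx j i, lf_apply, lf_apply]; simp
        refine ⟨_, hv, ?_, ?_, ?_⟩
        · rw [hprod]
          exact (stepH (fun i => S (β i) (k i : ℝ)) (fun i => (((2 / σ) • β i, 0) : V × ℝ))
            (wtPts Φ σ) ((AddSubgroup.closure {u | ∃ b ∈ Φ', u = (2 / σ) • b}).prod ⊥)
            (fun i y hy => wtPts_step hR hσ (hβ i) (k i) y hy) _
            (fun i _ => ⟨AddSubgroup.subset_closure ⟨_, hβ' i, rfl⟩, by simp⟩) _ hv).1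
        · intro i hij
          rw [S_apply, sub_sub_cancel, hlf i, if_neg hij, zero_add]
          exact ⟨hmem i, by simp⟩
        · rw [S_apply, sub_sub_cancel, hlf j, if_pos rfl]
          refine ⟨?_, by simp⟩
          have : ((1 + (m j : ℝ) * (x j).2) • ((coroot (α j), 0) : V × ℝ) - ((2 / σ) • α j, 0)).1
            = ((m j : ℝ) * (x j).2) • coroot (α j) := by
            simp only [Prod.fst_sub, Prod.fst_add, Prod.smul_fst, add_smul, one_smul]
            rw [hcor _ (hα j) hj]; abel
          rw [this]
          exact hmem j)
      i (List.mem_finRange i)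
    have h2 := smul_closure hσ2 this.1
    rwa [smul_smul, inv_mul_cancel₀ hσ2, one_smul] at h2
  -- expand g in the dual basis
  have hgN : g ∈ AddSubgroup.closure Φ' := by
    choose z hz using fun j => hxint j g hg 0
    have hexp : ∀ y : V × ℝ, y = ∑ j, lf (α j) (m j) y • x j := by
      intro y
      rw [← sub_eq_zero]
      apply hinj
      intro i
      rw [map_sub, map_sum]
      simp only [map_smul, hx, smul_eq_mul, mul_ite, mul_one, mul_zero]
      simp
    have hgsum : g = ∑ j, z j • α j := by
      apply ext_inner_left ℝ
      intro v
      have h1 := congrArg (lf g ((0 : ℤ) : ℝ)) (hexp (v, 0))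
      rw [map_sum] at h1
      simp only [map_smul, hz, smul_eq_mul] at h1
      simp only [lf_apply] at h1
      rw [inner_sum]
      simp only [← Int.cast_smul_eq_zsmul ℝ, inner_smul_right]
      simp only [mul_zero, sub_zero] at h1
      rw [h1]
      exact Finset.sum_congr rfl fun j _ => mul_comm _ _
    rw [hgsum]
    exact sum_mem fun j _ => zsmul_mem (hN j) _
  refine hR'.short (hR.ne_zero g hg) hgN ?_
  intro b hb
  by_cases hbl : ⟪b, b⟫ = ⟪b0, b0⟫
  · rw [hbl]; exact hmax g hg
  · rw [htwo b (hsub hb) hbl]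
end QC

theorem statement_18 (Φ : Set V) (hΦ : IsCrystRootSystem Φ) (hirr : IsIrreducibleRS Φ)
    (n : ℕ) (hrank : Module.finrank ℝ V = n)
    (w : Equiv.Perm V) (hw : w ∈ AffWeylGroup Φ) (hqc : IsQuasiCoxeterAff Φ n w)
    (β : Fin (n + 1) → V) (hβ : ∀ i, β i ∈ Φ) (k : Fin (n + 1) → ℤ)
    (hfac : (List.ofFn fun i => sAff (β i) (k i : ℝ)).prod = w)
    (hred : n + 1 = reflLength (AffReflections Φ) w) :
    Subgroup.closure (Set.range fun i => sAff (β i) 0) = WeylGroup Φ := by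
  obtain ⟨t, ht, htw, -, hgen⟩ := hqc
  choose α hα m hm using ht
  obtain rfl : t = fun i => sAff (α i) (m i : ℝ) := funext hm
  exact QC.main Φ hΦ hirr n hrank α hα m hgen β hβ k (htw.trans hfac.symm)


end
end

section
/- Let Φ be an irreducible crystallographic root system of rank n, W the associated affine Weyl group with set of reflections T, W_0 = W_Φ with set of reflections T_0, and p : W → W_0 the projection s_{α,k} ↦ s_α. Let w ∈ W be a quasi-Coxeter element for (W,T) and set w' := p(w). Then the Hurwitz action of the braid group B_{n+1} is transitive on the set Fac_{T_0,n+1}(w') := {(t_1,…,t_{n+1}) ∈ T_0^{n+1} | t_1⋯t_{n+1} = w' and ⟨t_1,…,t_{n+1}⟩ = W_0}. -/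
open scoped RealInnerProductSpace

noncomputable section

variable {V : Type*} [NormedAddCommGroup V] [InnerProductSpace ℝ V]

/-- The set of reflections `{s_α | α ∈ Φ}` of the finite Weyl group of `Φ`. -/
def FinReflections (Φ : Set V) : Set (Equiv.Perm V) :=
  {g | ∃ α ∈ Φ, g = sAff α 0}


namespace Hz

set_option linter.unusedSectionVars false
set_option linter.unusedSimpArgs false

section Grp
variable {G : Type*} [Group G]

theorem he_refl (l : List G) : HurwitzEquiv l l := Relation.EqvGen.refl l
theorem he_symm {l l' : List G} (h : HurwitzEquiv l l') : HurwitzEquiv l' l :=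
  Relation.EqvGen.symm _ _ h
theorem he_trans {l l' l'' : List G} (h : HurwitzEquiv l l') (h' : HurwitzEquiv l' l'') :
    HurwitzEquiv l l'' := Relation.EqvGen.trans _ _ _ h h'

theorem he_ctx (x y : List G) {l l' : List G} (h : HurwitzEquiv l l') :
    HurwitzEquiv (x ++ l ++ y) (x ++ l' ++ y) := by
  induction h with
  | rel a b h =>
    obtain ⟨u, v, p, q, rfl, rfl⟩ := h
    exact Relation.EqvGen.rel _ _ ⟨x ++ u, v ++ y, p, q, by simp, by simp⟩
  | refl a => exact he_refl _
  | symm a b _ ih => exact he_symm ih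
  | trans a b c _ _ ih1 ih2 => exact he_trans ih1 ih2

theorem he_pre (x : List G) {l l' : List G} (h : HurwitzEquiv l l') :
    HurwitzEquiv (x ++ l) (x ++ l') := by simpa using he_ctx x [] h
theorem he_suf (y : List G) {l l' : List G} (h : HurwitzEquiv l l') :
    HurwitzEquiv (l ++ y) (l' ++ y) := by simpa using he_ctx [] y h
theorem he_cons (x : G) {l l' : List G} (h : HurwitzEquiv l l') :
    HurwitzEquiv (x :: l) (x :: l') := he_pre [x] h

theorem he_swap (a b : G) : HurwitzEquiv [a, b] [a * b * a⁻¹, a] :=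
  Relation.EqvGen.rel _ _ ⟨[], [], a, b, rfl, rfl⟩

theorem he_right (a : G) (v : List G) :
    HurwitzEquiv (a :: v) (v.map (fun b => a * b * a⁻¹) ++ [a]) := by
  induction v with
  | nil => exact he_refl _
  | cons b v ih =>
    have h1 := he_suf v (he_swap a b)
    have h2 := he_cons (a * b * a⁻¹) ih
    exact he_trans h1 h2

theorem he_left (a : G) (v : List G) :
    HurwitzEquiv (v ++ [a]) (a :: v.map (fun b => a⁻¹ * b * a)) := by
  have h := he_right a (v.map (fun b => a⁻¹ * b * a))
  rw [List.map_map] at h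
  have : ((fun b => a * b * a⁻¹) ∘ (fun b => a⁻¹ * b * a)) = id := by
    funext b; simp [mul_assoc]
  rw [this, List.map_id] at h
  exact he_symm h

theorem he_length {l l' : List G} (h : HurwitzEquiv l l') : l.length = l'.length := by
  induction h with
  | rel a b h => obtain ⟨u, v, p, q, rfl, rfl⟩ := h; simp
  | refl a => rfl
  | symm a b _ ih => exact ih.symm
  | trans a b c _ _ ih1 ih2 => exact ih1.trans ih2

theorem he_prod {l l' : List G} (h : HurwitzEquiv l l') : l.prod = l'.prod := by
  induction h with
  | rel a b h => obtain ⟨u, v, p, q, rfl, rfl⟩ := h; simp [mul_assoc]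
  | refl a => rfl
  | symm a b _ ih => exact ih.symm
  | trans a b c _ _ ih1 ih2 => exact ih1.trans ih2

/-- subgroup generated by the entries of a list -/
def cl (l : List G) : Subgroup G := Subgroup.closure {g | g ∈ l}

theorem mem_cl {l : List G} {g : G} (h : g ∈ l) : g ∈ cl l := Subgroup.subset_closure h

theorem cl_le {l : List G} {H : Subgroup G} (h : ∀ g ∈ l, g ∈ H) : cl l ≤ H :=
  (Subgroup.closure_le H).2 h

theorem he_cl {l l' : List G} (h : HurwitzEquiv l l') : cl l = cl l' := by
  induction h with
  | rel a b h =>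
    obtain ⟨u, v, p, q, rfl, rfl⟩ := h
    apply le_antisymm
    · apply cl_le
      intro g hg
      have hp : p ∈ cl (u ++ (p * q * p⁻¹) :: p :: v) := mem_cl (by simp)
      have hq : p * q * p⁻¹ ∈ cl (u ++ (p * q * p⁻¹) :: p :: v) := mem_cl (by simp)
      simp only [List.mem_append, List.mem_cons] at hg
      rcases hg with hg | rfl | rfl | hg
      · exact mem_cl (by simp [hg])
      · exact hp
      · have := mul_mem (mul_mem (inv_mem hp) hq) hp
        simpa [mul_assoc] using this
      · exact mem_cl (by simp [hg])
    · apply cl_le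
      intro g hg
      have hp : p ∈ cl (u ++ p :: q :: v) := mem_cl (by simp)
      have hq : q ∈ cl (u ++ p :: q :: v) := mem_cl (by simp)
      simp only [List.mem_append, List.mem_cons] at hg
      rcases hg with hg | rfl | rfl | hg
      · exact mem_cl (by simp [hg])
      · exact mul_mem (mul_mem hp hq) (inv_mem hp)
      · exact hp
      · exact mem_cl (by simp [hg])
  | refl a => rfl
  | symm a b _ ih => exact ih.symm
  | trans a b c _ _ ih1 ih2 => exact ih1.trans ih2

theorem he_pair_move (s b : G) (hs : s * s = 1) : HurwitzEquiv [s, s, b] [b, s, s] := by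
  have h1 := he_cons s (he_swap s b)
  have h2 := he_suf [s] (he_swap s (s * b * s⁻¹))
  have e : s * (s * b * s⁻¹) * s⁻¹ = b := by
    have : s⁻¹ = s := inv_eq_of_mul_eq_one_left hs
    rw [this]
    calc s * (s * b * s) * s = (s * s) * b * (s * s) := by group
      _ = b := by simp [hs]
  rw [e] at h2
  exact he_trans h1 h2

theorem he_pair_conj1 (s b : G) (hs : s * s = 1) :
    HurwitzEquiv [s, s, b] [b * s * b⁻¹, b * s * b⁻¹, b] := by
  refine he_trans (he_pair_move s b hs) ?_
  exact he_right b [s, s]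

theorem he_pair_list (s : G) (hs : s * s = 1) (u : List G) :
    HurwitzEquiv (s :: s :: u) (u ++ [s, s]) := by
  induction u with
  | nil => exact he_refl _
  | cons b u ih => exact he_trans (he_suf u (he_pair_move s b hs)) (he_cons b ih)

theorem conj_sq {s : G} (hs : s * s = 1) (b : G) : (b * s * b⁻¹) * (b * s * b⁻¹) = 1 := by
  calc (b * s * b⁻¹) * (b * s * b⁻¹) = b * (s * s) * b⁻¹ := by group
    _ = 1 := by simp [hs]

theorem he_pair_conj (s b : G) (hs : s * s = 1) (m : List G) (hb : b ∈ m) :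
    HurwitzEquiv (s :: s :: m) ((b * s * b⁻¹) :: (b * s * b⁻¹) :: m) := by
  obtain ⟨u, v, rfl⟩ := List.append_of_mem hb
  have h1 := he_suf (b :: v) (he_pair_list s hs u)
  have h2 := he_ctx u v (he_pair_conj1 s b hs)
  have h3 := he_suf (b :: v) (he_symm (he_pair_list (b * s * b⁻¹) (conj_sq hs b) u))
  simp only [List.append_assoc, List.cons_append, List.nil_append] at h1 h2 h3
  exact he_trans h1 (he_trans h2 h3)

theorem he_pair_cl (m : List G) (g : G) (hg : g ∈ cl m) : ∀ (s : G), s * s = 1 →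
    HurwitzEquiv (s :: s :: m) ((g * s * g⁻¹) :: (g * s * g⁻¹) :: m) := by
  induction hg using Subgroup.closure_induction with
  | mem x hx => intro s hs; exact he_pair_conj s x hs m hx
  | one => intro s hs; simpa using he_refl _
  | mul x y _ _ ihx ihy =>
    intro s hs
    have := he_trans (ihy s hs) (ihx _ (conj_sq hs y))
    have e : x * (y * s * y⁻¹) * x⁻¹ = x * y * s * (x * y)⁻¹ := by group
    rwa [e] at this
  | inv x _ ih =>
    intro s hs
    have hs' : (x⁻¹ * s * x) * (x⁻¹ * s * x) = 1 := by simpa using conj_sq hs x⁻¹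
    have := ih _ hs'
    have e : x * (x⁻¹ * s * x) * x⁻¹ = s := by group
    rw [e] at this
    simpa using he_symm this

end Grp

/-! ### reflections -/

theorem rf_apply (β v : V) : sAff β 0 v = v - (2 * ⟪v, β⟫ / ⟪β, β⟫) • β := by
  simp only [sAff, Function.Involutive.coe_toPerm, sAffFun, coroot, smul_smul, sub_zero]
  congr 2; ring

theorem rf_inv (β : V) : (sAff β 0)⁻¹ = sAff β 0 := by
  ext v; rfl

theorem rf_sq (β : V) : sAff β 0 * sAff β 0 = 1 := by
  nth_rw 1 [← rf_inv]; simp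

theorem rf_rf (β v : V) : sAff β 0 (sAff β 0 v) = v := sAffFun_involutive β 0 v

theorem rf_sub (β x y : V) : sAff β 0 (x - y) = sAff β 0 x - sAff β 0 y := by
  simp only [rf_apply, inner_sub_left]
  module

theorem rf_smul (β x : V) (c : ℝ) : sAff β 0 (c • x) = c • sAff β 0 x := by
  simp only [rf_apply, real_inner_smul_left]
  module

theorem rf_inner (β x y : V) : ⟪sAff β 0 x, sAff β 0 y⟫ = ⟪x, y⟫ := by
  by_cases h : β = 0
  · subst h; simp [rf_apply]
  · have h2 : ⟪β, β⟫ ≠ 0 := fun hz => h (inner_self_eq_zero.mp hz)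
    simp only [rf_apply, inner_sub_left, inner_sub_right, real_inner_smul_left,
      real_inner_smul_right, real_inner_comm y β]
    field_simp
    ring

theorem rf_conj (β γ : V) :
    sAff (sAff β 0 γ) 0 = sAff β 0 * sAff γ 0 * (sAff β 0)⁻¹ := by
  ext v
  rw [rf_inv, Equiv.Perm.mul_apply, Equiv.Perm.mul_apply, rf_apply γ, rf_sub, rf_smul, rf_rf,
    rf_apply (sAff β 0 γ), rf_inner, ← rf_inner β v, rf_rf]

theorem rf_scale (x : V) (c : ℝ) (hc : c ≠ 0) : sAff (c • x) 0 = sAff x 0 := by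
  ext v
  simp only [rf_apply, real_inner_smul_left, real_inner_smul_right, smul_smul]
  by_cases h : x = 0
  · subst h; simp
  · have h2 : ⟪x, x⟫ ≠ 0 := fun hz => h (inner_self_eq_zero.mp hz)
    congr 2
    field_simp

theorem rf_par {x y : V} (hx : x ≠ 0) (hy : y ≠ 0) (h : ‖x‖ * ‖y‖ ≤ |⟪x, y⟫|) :
    sAff x 0 = sAff y 0 := by
  have h1 : ‖(⟪x, y⟫ : ℝ)‖ = ‖x‖ * ‖y‖ := le_antisymm (norm_inner_le_norm x y) h
  have h2 : x = 0 ∨ ∃ r : ℝ, y = r • x := ((norm_inner_eq_norm_tfae ℝ x y).out 0 2).1 h1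
  obtain ⟨r, rfl⟩ := h2.resolve_left hx
  have hr : r ≠ 0 := by rintro rfl; simp at hy
  exact (rf_scale x r hr).symm

/-- the part of the root system structure which is inherited by reflection subsystems -/
structure RS (Ψ : Set V) : Prop where
  ne_zero : ∀ α ∈ Ψ, α ≠ 0
  refl_mem : ∀ α ∈ Ψ, ∀ β ∈ Ψ, sAff α 0 β ∈ Ψ
  cryst : ∀ α ∈ Ψ, ∀ β ∈ Ψ, ∃ n : ℤ, 2 * ⟪β, α⟫ / ⟪α, α⟫ = (n : ℝ)

def ip (γ β : V) : ℤ := round (2 * ⟪γ, β⟫ / ⟪β, β⟫)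

theorem RS.pos {Ψ : Set V} (h : RS Ψ) {β : V} (hβ : β ∈ Ψ) : 0 < ⟪β, β⟫ :=
  real_inner_self_pos.2 (h.ne_zero β hβ)

theorem ip_div {Ψ : Set V} (h : RS Ψ) {β γ : V} (hβ : β ∈ Ψ) (hγ : γ ∈ Ψ) :
    ((ip γ β : ℤ) : ℝ) = 2 * ⟪γ, β⟫ / ⟪β, β⟫ := by
  obtain ⟨n, hn⟩ := h.cryst β hβ γ hγ
  rw [ip, hn, round_intCast]

theorem ip_spec {Ψ : Set V} (h : RS Ψ) {β γ : V} (hβ : β ∈ Ψ) (hγ : γ ∈ Ψ) :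
    ((ip γ β : ℤ) : ℝ) * ⟪β, β⟫ = 2 * ⟪γ, β⟫ := by
  rw [ip_div h hβ hγ, div_mul_cancel₀ _ (h.pos hβ).ne']

theorem ip_symm {Ψ : Set V} (h : RS Ψ) {β γ : V} (hβ : β ∈ Ψ) (hγ : γ ∈ Ψ) :
    ((ip γ β : ℤ) : ℝ) * ⟪β, β⟫ = ((ip β γ : ℤ) : ℝ) * ⟪γ, γ⟫ := by
  rw [ip_spec h hβ hγ, ip_spec h hγ hβ, real_inner_comm]

theorem rf_ip {Ψ : Set V} (h : RS Ψ) {β γ : V} (hβ : β ∈ Ψ) (hγ : γ ∈ Ψ) :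
    sAff β 0 γ = γ - ((ip γ β : ℤ) : ℝ) • β := by
  rw [rf_apply, ip_div h hβ hγ]

/-! ### vector lists -/

def rl (l : List V) : List (Equiv.Perm V) := l.map (fun β => sAff β 0)

@[simp] theorem rl_cons (x : V) (l : List V) : rl (x :: l) = sAff x 0 :: rl l := rfl
@[simp] theorem rl_nil : rl ([] : List V) = [] := rfl
@[simp] theorem rl_append (l l' : List V) : rl (l ++ l') = rl l ++ rl l' := by simp [rl]
@[simp] theorem rl_length (l : List V) : (rl l).length = l.length := by simp [rl]

theorem rl_map (β : V) (l : List V) :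
    rl (l.map (sAff β 0)) = (rl l).map (fun b => sAff β 0 * b * (sAff β 0)⁻¹) := by
  simp only [rl, List.map_map]
  apply List.map_congr_left
  intro x _
  simp [rf_conj]

theorem rl_map' (β : V) (l : List V) :
    rl (l.map (sAff β 0)) = (rl l).map (fun b => (sAff β 0)⁻¹ * b * sAff β 0) := by
  rw [rl_map, rf_inv]

theorem v_right (β : V) (u v w : List V) :
    HurwitzEquiv (rl (u ++ β :: (v ++ w))) (rl (u ++ (v.map (sAff β 0) ++ β :: w))) := by
  have h := he_ctx (rl u) (rl w) (he_right (sAff β 0) (rl v))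
  rw [← rl_map] at h
  simpa using h

theorem v_left (β : V) (u v w : List V) :
    HurwitzEquiv (rl (u ++ (v ++ β :: w))) (rl (u ++ β :: (v.map (sAff β 0) ++ w))) := by
  have h := he_ctx (rl u) (rl w) (he_left (sAff β 0) (rl v))
  rw [← rl_map'] at h
  simpa using h

theorem map_mem {Ψ : Set V} (h : RS Ψ) {β : V} (hβ : β ∈ Ψ) {l : List V} (hl : ∀ x ∈ l, x ∈ Ψ) :
    ∀ x ∈ l.map (sAff β 0), x ∈ Ψ := by
  intro x hx
  obtain ⟨y, hy, rfl⟩ := List.mem_map.1 hx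
  exact h.refl_mem _ hβ _ (hl y hy)

/-- pulling an entry to the front -/
theorem v_pull {Ψ : Set V} (h : RS Ψ) {l : List V} (hl : ∀ x ∈ l, x ∈ Ψ) {β : V} (hβ : β ∈ l) :
    ∃ m : List V, (∀ x ∈ m, x ∈ Ψ) ∧ HurwitzEquiv (rl l) (rl (β :: m)) := by
  obtain ⟨u, v, rfl⟩ := List.append_of_mem hβ
  refine ⟨u.map (sAff β 0) ++ v, ?_, by simpa using v_left β [] u v⟩
  intro x hx
  rcases List.mem_append.1 hx with hx | hx
  · exact map_mem h (hl β hβ) (fun y hy => hl y (by simp [hy])) x hx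
  · exact hl x (by simp [hx])

/-- two entries with the same reflection can be brought to the front -/
theorem v_pair {Ψ : Set V} (h : RS Ψ) {u v : List V} {β : V} (hl : ∀ x ∈ u ++ β :: v, x ∈ Ψ)
    {γ : V} (hγ : γ ∈ u ++ v) (he : sAff γ 0 = sAff β 0) :
    ∃ m : List V, (∀ x ∈ m, x ∈ Ψ) ∧ HurwitzEquiv (rl (u ++ β :: v)) (rl (β :: β :: m)) := by
  have hβ : β ∈ Ψ := hl β (by simp)
  have h1 := v_left β [] u v
  simp only [List.nil_append] at h1
  have hr : ∀ x ∈ u.map (sAff β 0) ++ v, x ∈ Ψ := by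
    intro x hx
    rcases List.mem_append.1 hx with hx | hx
    · exact map_mem h hβ (fun y hy => hl y (by simp [hy])) x hx
    · exact hl x (by simp [hx])
  obtain ⟨δ, hδ, hδe⟩ : ∃ δ ∈ u.map (sAff β 0) ++ v, sAff δ 0 = sAff β 0 := by
    rcases List.mem_append.1 hγ with hx | hx
    · exact ⟨sAff β 0 γ, by simp; exact Or.inl hx, by rw [rf_conj, he]; simp⟩
    · exact ⟨γ, by simp [hx], he⟩
  obtain ⟨m, hm, hme⟩ := v_pull h hr hδ
  refine ⟨m, hm, he_trans h1 ?_⟩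
  have := he_cons (sAff β 0) hme
  simpa [hδe] using this

/-! ### weighted lists and the descent -/

def ws (L : List (ℤ × V)) : V := (L.map (fun p => (p.1 : ℝ) • p.2)).sum
def ms (L : List (ℤ × V)) : ℕ := (L.map (fun p => p.1.natAbs)).sum
def vl (L : List (ℤ × V)) : List V := L.map Prod.snd
def JJ (N : ℝ) (L : List (ℤ × V)) : Prop :=
  ∀ p ∈ L, ∃ k : ℤ, (p.1 : ℝ) * ⟪p.2, p.2⟫ = k * N
def In (Ψ : Set V) (L : List (ℤ × V)) : Prop := ∀ p ∈ L, p.2 ∈ Ψ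
def sh (β : V) (p : ℤ × V) : ℤ × V := (p.1, sAff β 0 p.2)
def SS (β : V) (L : List (ℤ × V)) : ℤ := (L.map (fun p => p.1 * ip p.2 β)).sum

@[simp] theorem ws_nil : ws ([] : List (ℤ × V)) = 0 := rfl
@[simp] theorem ws_cons (p : ℤ × V) (L : List (ℤ × V)) : ws (p :: L) = (p.1 : ℝ) • p.2 + ws L := rfl
@[simp] theorem ws_append (L M : List (ℤ × V)) : ws (L ++ M) = ws L + ws M := by simp [ws]
@[simp] theorem ms_cons (p : ℤ × V) (L : List (ℤ × V)) : ms (p :: L) = p.1.natAbs + ms L := rfl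
@[simp] theorem ms_append (L M : List (ℤ × V)) : ms (L ++ M) = ms L + ms M := by simp [ms]
@[simp] theorem vl_nil : vl ([] : List (ℤ × V)) = [] := rfl
@[simp] theorem vl_cons (p : ℤ × V) (L : List (ℤ × V)) : vl (p :: L) = p.2 :: vl L := rfl
@[simp] theorem vl_append (L M : List (ℤ × V)) : vl (L ++ M) = vl L ++ vl M := by simp [vl]
@[simp] theorem SS_nil (β : V) : SS β [] = 0 := rfl
@[simp] theorem SS_cons (β : V) (p : ℤ × V) (L : List (ℤ × V)) :
    SS β (p :: L) = p.1 * ip p.2 β + SS β L := rfl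
@[simp] theorem SS_append (β : V) (L M : List (ℤ × V)) : SS β (L ++ M) = SS β L + SS β M := by
  simp [SS]
@[simp] theorem ms_sh (β : V) (L : List (ℤ × V)) : ms (L.map (sh β)) = ms L := by
  simp [ms, sh, Function.comp_def]
@[simp] theorem vl_sh (β : V) (L : List (ℤ × V)) : vl (L.map (sh β)) = (vl L).map (sAff β 0) := by
  simp [vl, sh, Function.comp_def]

theorem In_append {Ψ : Set V} {L M : List (ℤ × V)} : In Ψ (L ++ M) ↔ In Ψ L ∧ In Ψ M := by
  simp only [In, List.mem_append]
  exact ⟨fun h => ⟨fun p hp => h p (Or.inl hp), fun p hp => h p (Or.inr hp)⟩,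
    fun h p hp => hp.elim (h.1 p) (h.2 p)⟩
theorem In_cons {Ψ : Set V} {p : ℤ × V} {M : List (ℤ × V)} : In Ψ (p :: M) ↔ p.2 ∈ Ψ ∧ In Ψ M := by
  simp [In]
theorem JJ_append {N : ℝ} {L M : List (ℤ × V)} : JJ N (L ++ M) ↔ JJ N L ∧ JJ N M := by
  simp only [JJ, List.mem_append]
  exact ⟨fun h => ⟨fun p hp => h p (Or.inl hp), fun p hp => h p (Or.inr hp)⟩,
    fun h p hp => hp.elim (h.1 p) (h.2 p)⟩
theorem JJ_cons {N : ℝ} {p : ℤ × V} {M : List (ℤ × V)} :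
    JJ N (p :: M) ↔ (∃ k : ℤ, (p.1 : ℝ) * ⟪p.2, p.2⟫ = k * N) ∧ JJ N M := by
  simp only [JJ, List.forall_mem_cons]

theorem In_sh {Ψ : Set V} (h : RS Ψ) {β : V} (hβ : β ∈ Ψ) {L : List (ℤ × V)} (hL : In Ψ L) :
    In Ψ (L.map (sh β)) := by
  intro p hp
  obtain ⟨q, hq, rfl⟩ := List.mem_map.1 hp
  exact h.refl_mem _ hβ _ (hL q hq)

theorem JJ_sh {N : ℝ} {β : V} {L : List (ℤ × V)} (hL : JJ N L) : JJ N (L.map (sh β)) := by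
  intro p hp
  obtain ⟨q, hq, rfl⟩ := List.mem_map.1 hp
  simpa only [sh, rf_inner] using hL q hq

theorem ws_sh {Ψ : Set V} (h : RS Ψ) {β : V} (hβ : β ∈ Ψ) {L : List (ℤ × V)} (hL : In Ψ L) :
    ws (L.map (sh β)) = ws L - (SS β L : ℝ) • β := by
  induction L with
  | nil => simp
  | cons p L ih =>
    obtain ⟨hp, hL⟩ := In_cons.1 hL
    simp only [List.map_cons, ws_cons, SS_cons, ih hL, sh, rf_ip h hβ hp]
    push_cast
    module

theorem SS_inner {Ψ : Set V} (h : RS Ψ) {β : V} (hβ : β ∈ Ψ) {L : List (ℤ × V)} (hL : In Ψ L) :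
    (SS β L : ℝ) * ⟪β, β⟫ = 2 * ⟪ws L, β⟫ := by
  induction L with
  | nil => simp
  | cons p L ih =>
    obtain ⟨hp, hL⟩ := In_cons.1 hL
    simp only [ws_cons, SS_cons, inner_add_left, real_inner_smul_left]
    push_cast
    rw [add_mul, ih hL, mul_assoc, ip_spec h hβ hp]
    ring

theorem SS_JJ {Ψ : Set V} (h : RS Ψ) {β : V} (hβ : β ∈ Ψ) {N : ℝ} {L : List (ℤ × V)} (hL : In Ψ L)
    (hJ : JJ N L) : ∃ k : ℤ, (SS β L : ℝ) * ⟪β, β⟫ = k * N := by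
  induction L with
  | nil => exact ⟨0, by simp⟩
  | cons p L ih =>
    obtain ⟨hp, hL⟩ := In_cons.1 hL
    obtain ⟨⟨k, hk⟩, hJ⟩ := JJ_cons.1 hJ
    obtain ⟨k', hk'⟩ := ih hL hJ
    refine ⟨k * ip β p.2 + k', ?_⟩
    simp only [SS_cons]
    push_cast
    rw [add_mul, hk', mul_assoc, ip_symm h hβ hp]
    linear_combination (ip β p.2 : ℝ) * hk

/-- all invariants preserved by a block move -/
def Inv (Ψ : Set V) (L L' : List (ℤ × V)) : Prop :=
  HurwitzEquiv (rl (vl L)) (rl (vl L')) ∧ ws L' = ws L ∧ In Ψ L' ∧ ∀ N, JJ N L → JJ N L'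

theorem inv_right {Ψ : Set V} (h : RS Ψ) {u v w : List (ℤ × V)} {c : ℤ} {β : V}
    (hL : In Ψ (u ++ (c, β) :: (v ++ w))) :
    Inv Ψ (u ++ (c, β) :: (v ++ w)) (u ++ (v.map (sh β) ++ (c + SS β v, β) :: w)) := by
  simp only [In_append, In_cons] at hL
  obtain ⟨hu, hβ, hv, hw⟩ := hL
  refine ⟨by simpa using v_right β (vl u) (vl v) (vl w), ?_, ?_, ?_⟩
  · simp only [ws_append, ws_cons, ws_sh h hβ hv]
    push_cast
    module
  · simp only [In_append, In_cons]
    exact ⟨hu, In_sh h hβ hv, hβ, hw⟩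
  · intro N hJ
    simp only [JJ_append, JJ_cons] at hJ ⊢
    obtain ⟨h1, ⟨k, hk⟩, h3, h4⟩ := hJ
    refine ⟨h1, JJ_sh h3, ?_, h4⟩
    obtain ⟨k', hk'⟩ := SS_JJ h hβ hv h3
    refine ⟨k + k', ?_⟩
    push_cast
    linear_combination hk + hk'

theorem inv_left {Ψ : Set V} (h : RS Ψ) {u v w : List (ℤ × V)} {c : ℤ} {β : V}
    (hL : In Ψ (u ++ (v ++ (c, β) :: w))) :
    Inv Ψ (u ++ (v ++ (c, β) :: w)) (u ++ (c + SS β v, β) :: (v.map (sh β) ++ w)) := by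
  simp only [In_append, In_cons] at hL
  obtain ⟨hu, hv, hβ, hw⟩ := hL
  refine ⟨by simpa using v_left β (vl u) (vl v) (vl w), ?_, ?_, ?_⟩
  · simp only [ws_append, ws_cons, ws_sh h hβ hv]
    push_cast
    module
  · simp only [In_append, In_cons]
    exact ⟨hu, hβ, In_sh h hβ hv, hw⟩
  · intro N hJ
    simp only [JJ_append, JJ_cons] at hJ ⊢
    obtain ⟨h1, h3, ⟨k, hk⟩, h4⟩ := hJ
    refine ⟨h1, ?_, JJ_sh h3, h4⟩
    obtain ⟨k', hk'⟩ := SS_JJ h hβ hv h3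
    refine ⟨k + k', ?_⟩
    push_cast
    linear_combination hk + hk'

theorem split_pre (β : V) (ε K : ℤ) (v : List (ℤ × V)) (hs : ε * SS β v < 0)
    (hK : ∀ p ∈ v, -K < ε * (p.1 * ip p.2 β)) :
    ∃ v1 v2, v = v1 ++ v2 ∧ ε * SS β v1 < 0 ∧ -K < ε * SS β v1 := by
  induction v using List.reverseRecOn with
  | nil => simp at hs
  | append_singleton v p ih =>
    by_cases h0 : ε * SS β v < 0
    · obtain ⟨v1, v2, rfl, h1, h2⟩ := ih h0 (fun q hq => hK q (by simp [hq]))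
      exact ⟨v1, v2 ++ [p], by simp, h1, h2⟩
    · refine ⟨v ++ [p], [], by simp, hs, ?_⟩
      have := hK p (by simp)
      simp only [SS_append, SS_cons, SS_nil, mul_add, mul_zero, add_zero] at *
      linarith

theorem split_suf (β : V) (ε K : ℤ) (v : List (ℤ × V)) (hs : ε * SS β v < 0)
    (hK : ∀ p ∈ v, -K < ε * (p.1 * ip p.2 β)) :
    ∃ v1 v2, v = v1 ++ v2 ∧ ε * SS β v2 < 0 ∧ -K < ε * SS β v2 := by
  induction v with
  | nil => simp at hs
  | cons p v ih =>
    by_cases h0 : ε * SS β v < 0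
    · obtain ⟨v1, v2, rfl, h1, h2⟩ := ih h0 (fun q hq => hK q (by simp [hq]))
      exact ⟨p :: v1, v2, by simp, h1, h2⟩
    · refine ⟨[], p :: v, by simp, hs, ?_⟩
      have := hK p (by simp)
      simp only [SS_cons, mul_add] at *
      linarith

theorem natAbs_desc {ε c S : ℤ} (hε : ε = 1 ∨ ε = -1) (hc : 0 < ε * c) (h1 : ε * S < 0)
    (h2 : -(2 * (ε * c)) < ε * S) : (c + S).natAbs < c.natAbs := by
  rcases hε with rfl | rfl <;> omega

theorem descent {Ψ : Set V} (h : RS Ψ) {u v : List (ℤ × V)} {c : ℤ} {β : V}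
    (hL : In Ψ (u ++ (c, β) :: v)) (hc : c ≠ 0)
    (hmax : ∀ p ∈ u ++ v, |(p.1 : ℝ)| * ‖p.2‖ ≤ |(c : ℝ)| * ‖β‖)
    (hpar : ∀ p ∈ u ++ v, |⟪p.2, β⟫| < ‖p.2‖ * ‖β‖)
    (htot : (c : ℝ) * ⟪ws (u ++ (c, β) :: v), β⟫ < (c : ℝ) * c * ⟪β, β⟫) :
    ∃ L', Inv Ψ (u ++ (c, β) :: v) L' ∧ ms L' < ms (u ++ (c, β) :: v) ∧
      ∀ p ∈ u ++ v, ∃ q ∈ L', q.1 = p.1 := by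
  have hL' := hL
  simp only [In_append, In_cons] at hL'
  obtain ⟨hu, hβ, hv⟩ := hL'
  have hpos := h.pos hβ
  obtain ⟨ε, hε, hεc⟩ : ∃ ε : ℤ, (ε = 1 ∨ ε = -1) ∧ 0 < ε * c := by
    rcases lt_or_gt_of_ne hc with h0 | h0
    · exact ⟨-1, Or.inr rfl, by omega⟩
    · exact ⟨1, Or.inl rfl, by omega⟩
  have hεr : ((ε : ℝ)) = 1 ∨ (ε : ℝ) = -1 := by
    rcases hε with rfl | rfl <;> simp
  have hεcr : (0 : ℝ) < ε * c := by exact_mod_cast hεc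
  have habs : |(c : ℝ)| = ε * c := by
    rcases hεr with e | e <;> rw [e] at hεcr ⊢
    · rw [abs_of_pos (by linarith)]; ring
    · rw [abs_of_neg (by linarith)]; ring
  have hstep : ∀ p ∈ u ++ v, -(2 * (ε * c)) < ε * (p.1 * ip p.2 β) := by
    intro p hp
    have hpΨ : p.2 ∈ Ψ := by
      rcases List.mem_append.1 hp with hp | hp
      · exact hu p hp
      · exact hv p hp
    have key : |(p.1 : ℝ)| * |⟪p.2, β⟫| < (ε * c) * ⟪β, β⟫ := by
      rw [← habs, real_inner_self_eq_norm_mul_norm]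
      by_cases h0 : (p.1 : ℝ) = 0
      · rw [h0, abs_zero, zero_mul]
        have : 0 < ‖β‖ := norm_pos_iff.2 (h.ne_zero β hβ)
        have : 0 < |(c : ℝ)| := by rw [habs]; exact hεcr
        positivity
      · have h1 := mul_lt_mul_of_pos_left (hpar p hp) (abs_pos.2 h0)
        have h2 := mul_le_mul_of_nonneg_right (hmax p hp) (norm_nonneg β)
        calc _ < _ := h1
          _ = |(p.1 : ℝ)| * ‖p.2‖ * ‖β‖ := by ring
          _ ≤ _ := h2
          _ = _ := by ring
    have h3 : -((ε * c) * ⟪β, β⟫) < ε * (p.1 * ⟪p.2, β⟫) := by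
      rw [← abs_mul] at key
      have h4 := abs_lt.1 key
      rcases hεr with e | e <;> rw [e] at h4 ⊢ <;> linarith [h4.1, h4.2]
    have h5 : (-(2 * (ε * c)) : ℝ) * ⟪β, β⟫ < (ε * (p.1 * ip p.2 β) : ℝ) * ⟪β, β⟫ := by
      have := ip_spec h hβ hpΨ
      have e : (ε * (p.1 * ip p.2 β) : ℝ) * ⟪β, β⟫ = 2 * (ε * (p.1 * ⟪p.2, β⟫)) := by
        linear_combination (ε * p.1 : ℝ) * this
      rw [e]; linarith
    have h6 := lt_of_mul_lt_mul_right h5 hpos.le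
    exact_mod_cast h6
  have hsum : ε * SS β u + ε * SS β v < 0 := by
    have e1 := SS_inner h hβ hu
    have e2 := SS_inner h hβ hv
    have h1 : (ε : ℝ) * ⟪ws (u ++ (c, β) :: v), β⟫ < ε * c * ⟪β, β⟫ := by
      have h2 : (ε * c : ℝ) * (ε * ⟪ws (u ++ (c, β) :: v), β⟫) < (ε * c) * (ε * c * ⟪β, β⟫) := by
        rcases hεr with e | e <;> rw [e] <;> linarith
      exact lt_of_mul_lt_mul_left h2 hεcr.le
    simp only [ws_append, ws_cons, inner_add_left, real_inner_smul_left] at h1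
    have h2 : ((ε * SS β u + ε * SS β v : ℤ) : ℝ) * ⟪β, β⟫ < 0 * ⟪β, β⟫ := by
      push_cast
      have e : ((ε : ℝ) * SS β u + ε * SS β v) * ⟪β, β⟫ = 2 * (ε * (⟪ws u, β⟫ + ⟪ws v, β⟫)) := by
        linear_combination (ε : ℝ) * e1 + (ε : ℝ) * e2
      rw [e]; linarith
    exact_mod_cast lt_of_mul_lt_mul_right h2 hpos.le
  rcases lt_or_ge (ε * SS β v) 0 with h0 | h0
  · obtain ⟨v1, v2, rfl, h1, h2⟩ := split_pre β ε _ v h0 (fun p hp => hstep p (by simp [hp]))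
    refine ⟨_, inv_right h hL, ?_, ?_⟩
    · have := natAbs_desc hε hεc h1 h2
      simp only [ms_append, ms_cons, ms_sh]
      omega
    · intro p hp
      simp only [List.mem_append] at hp
      rcases hp with hp | hp | hp
      · exact ⟨p, by simp [hp], rfl⟩
      · exact ⟨sh β p, by simp only [List.mem_append]; exact Or.inr (Or.inl (List.mem_map_of_mem hp)), rfl⟩
      · exact ⟨p, by simp [hp], rfl⟩
  · obtain ⟨v1, v2, rfl, h1, h2⟩ := split_suf β ε _ u (by linarith)
      (fun p hp => hstep p (by rw [List.mem_append]; exact Or.inl hp))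
    rw [List.append_assoc] at hL ⊢
    refine ⟨_, inv_left h hL, ?_, ?_⟩
    · have := natAbs_desc hε hεc h1 h2
      simp only [ms_append, ms_cons, ms_sh]
      omega
    · intro p hp
      simp only [List.mem_append] at hp
      rcases hp with (hp | hp) | hp
      · exact ⟨p, by simp [hp], rfl⟩
      · exact ⟨sh β p, by simp only [List.mem_append, List.mem_cons]; exact Or.inr (Or.inr (Or.inl (List.mem_map_of_mem hp))), rfl⟩
      · exact ⟨p, by simp [hp], rfl⟩

theorem exists_max (L : List (ℤ × V)) (hne : L ≠ []) :
    ∃ (u : List (ℤ × V)) (c : ℤ) (β : V) (v : List (ℤ × V)), L = u ++ (c, β) :: v ∧ ∀ p ∈ L, |(p.1 : ℝ)| * ‖p.2‖ ≤ |(c : ℝ)| * ‖β‖ := by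
  obtain ⟨p, hp⟩ := List.exists_mem_of_ne_nil L hne
  obtain ⟨⟨c, β⟩, hq, hm⟩ := Set.exists_max_image {p | p ∈ L}
    (fun p : ℤ × V => |(p.1 : ℝ)| * ‖p.2‖) (List.finite_toSet L) ⟨p, hp⟩
  obtain ⟨u, v, huv⟩ := List.append_of_mem hq
  exact ⟨u, c, β, v, huv, hm⟩

theorem In_vl {Ψ : Set V} {L : List (ℤ × V)} (h : In Ψ L) : ∀ x ∈ vl L, x ∈ Ψ := by
  intro x hx
  obtain ⟨p, hp, rfl⟩ := List.mem_map.1 hx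
  exact h p hp

theorem pair_of_par {Ψ : Set V} (h : RS Ψ) {u v : List (ℤ × V)} {c : ℤ} {β : V}
    (hL : In Ψ (u ++ (c, β) :: v)) {p : ℤ × V} (hp : p ∈ u ++ v)
    (hpar : ‖p.2‖ * ‖β‖ ≤ |⟪p.2, β⟫|) :
    ∃ x m, x ∈ Ψ ∧ (∀ y ∈ m, y ∈ Ψ) ∧
      HurwitzEquiv (rl (vl (u ++ (c, β) :: v))) (rl (x :: x :: m)) := by
  have hβ : β ∈ Ψ := hL (c, β) (by simp)
  have hpΨ : p.2 ∈ Ψ := hL p (by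
    rcases List.mem_append.1 hp with hp | hp <;> simp [hp])
  have hv := In_vl hL
  simp only [vl_append, vl_cons] at hv ⊢
  obtain ⟨m, hm, he⟩ := v_pair h hv (γ := p.2)
    (by rw [← vl_append]; exact List.mem_map_of_mem hp)
    (rf_par (h.ne_zero _ hpΨ) (h.ne_zero _ hβ) hpar)
  exact ⟨β, m, hβ, hm, he⟩

/-- Lemma A: an integrally dependent list of roots is equivalent to one starting with a repeated
reflection. -/
theorem lemA {Ψ : Set V} (h : RS Ψ) (k : ℕ) : ∀ L : List (ℤ × V), ms L ≤ k → In Ψ L → ws L = 0 →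
    (∃ p ∈ L, p.1 ≠ 0) → ∃ x m, x ∈ Ψ ∧ (∀ y ∈ m, y ∈ Ψ) ∧
      HurwitzEquiv (rl (vl L)) (rl (x :: x :: m)) := by
  induction k using Nat.strong_induction_on with
  | _ k ih =>
  intro L hk hL h0 ⟨p0, hp0, hp0n⟩
  obtain ⟨u, c, β, v, rfl, hmax⟩ := exists_max L (List.ne_nil_of_mem hp0)
  have hβ : β ∈ Ψ := hL (c, β) (by simp)
  have hcn : c ≠ 0 := by
    rintro rfl
    have h1 := hmax p0 hp0
    have h2 : 0 < ‖p0.2‖ := norm_pos_iff.2 (h.ne_zero _ (hL p0 hp0))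
    have h3 : 0 < |(p0.1 : ℝ)| := abs_pos.2 (by exact_mod_cast hp0n)
    simp at h1
    nlinarith
  by_cases hpar : ∀ p ∈ u ++ v, |⟪p.2, β⟫| < ‖p.2‖ * ‖β‖
  · obtain ⟨L', ⟨hE, hws, hin, -⟩, hms, hq⟩ := descent h hL hcn
      (fun p hp => hmax p (by rcases List.mem_append.1 hp with hp | hp <;> simp [hp])) hpar (by
        rw [h0, inner_zero_left, mul_zero]
        have := h.pos hβ
        have : 0 < (c : ℝ) * c := mul_self_pos.2 (by exact_mod_cast hcn)
        positivity)
    obtain ⟨p, hp, hpn⟩ : ∃ p ∈ u ++ v, p.1 ≠ 0 := by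
      by_contra hcon
      push Not at hcon
      have hz : ∀ M : List (ℤ × V), (∀ p ∈ M, p.1 = 0) → ws M = 0 := by
        intro M hM
        induction M with
        | nil => rfl
        | cons p M ih =>
          simp only [List.forall_mem_cons] at hM
          simp [hM.1, ih hM.2]
      rw [ws_append, ws_cons, hz u (fun p hp => hcon p (by simp [hp])),
        hz v (fun p hp => hcon p (by simp [hp]))] at h0
      simp only [zero_add, add_zero, smul_eq_zero] at h0
      rcases h0 with h0 | h0
      · exact hcn (by exact_mod_cast h0)
      · exact h.ne_zero β hβ h0
    obtain ⟨q, hqL, hqe⟩ := hq p hp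
    obtain ⟨x, m, hx, hm, hE'⟩ := ih (ms L') (by omega) L' le_rfl hin (by rw [hws, h0])
      ⟨q, hqL, by rw [hqe]; exact hpn⟩
    exact ⟨x, m, hx, hm, he_trans hE hE'⟩
  · push Not at hpar
    obtain ⟨p, hp, hpp⟩ := hpar
    exact pair_of_par h hL hp hpp

/-! ### spans and independence -/

def sp (l : List V) : Submodule ℝ V := Submodule.span ℝ {x | x ∈ l}

theorem mem_sp {l : List V} {x : V} (h : x ∈ l) : x ∈ sp l := Submodule.subset_span h

theorem sp_le {l : List V} {S : Submodule ℝ V} (h : ∀ x ∈ l, x ∈ S) : sp l ≤ S :=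
  Submodule.span_le.2 h

theorem sp_cons (x : V) (l : List V) : sp (x :: l) = Submodule.span ℝ {x} ⊔ sp l := by
  rw [sp, sp, ← Submodule.span_union]
  congr 1
  ext y
  simp

theorem sp_cons_of_mem {x : V} {l : List V} (h : x ∈ sp l) : sp (x :: l) = sp l := by
  apply le_antisymm
  · apply sp_le
    intro y hy
    rcases List.mem_cons.1 hy with rfl | hy
    · exact h
    · exact mem_sp hy
  · exact sp_le fun y hy => mem_sp (by simp [hy])

def Indep (l : List V) : Prop := Module.finrank ℝ (sp l) = l.length

theorem sp_finrank_le [FiniteDimensional ℝ V] (l : List V) :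
    Module.finrank ℝ (sp l) ≤ l.length := by
  induction l with
  | nil =>
    have : {x : V | x ∈ ([] : List V)} = ∅ := by ext; simp
    rw [sp, this]; simp
  | cons x l ih =>
    rw [sp_cons]
    have h1 := Submodule.finrank_add_le_finrank_add_finrank (Submodule.span ℝ {x}) (sp l)
    have h2 : Module.finrank ℝ (Submodule.span ℝ {x}) ≤ 1 := (finrank_span_le_card {x}).trans (by simp)
    simp only [List.length_cons]
    omega

theorem indep_notMem [FiniteDimensional ℝ V] {x : V} {l : List V} (h : Indep (x :: l)) :
    x ∉ sp l := by
  intro hx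
  have h1 := sp_finrank_le l
  rw [Indep, sp_cons_of_mem hx] at h
  simp at h
  omega

theorem indep_tail [FiniteDimensional ℝ V] {x : V} {l : List V} (h : Indep (x :: l)) :
    Indep l := by
  have h0 := sp_finrank_le l
  rw [Indep, sp_cons] at h
  have h1 := Submodule.finrank_add_le_finrank_add_finrank (Submodule.span ℝ {x}) (sp l)
  have h2 : Module.finrank ℝ (Submodule.span ℝ {x}) ≤ 1 := (finrank_span_le_card {x}).trans (by simp)
  simp only [List.length_cons] at h
  rw [Indep]
  omega

theorem not_indep_pair [FiniteDimensional ℝ V] {x : V} {l : List V} : ¬ Indep (x :: x :: l) :=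
  fun h => indep_notMem h (mem_sp (by simp))

theorem rf_fix {β x : V} : sAff β 0 x = x ↔ ⟪β, x⟫ = 0 := by
  rw [rf_apply, sub_eq_self, smul_eq_zero]
  constructor
  · rintro (h | h)
    · rw [div_eq_zero_iff] at h
      rcases h with h | h
      · rw [real_inner_comm]; linarith
      · rw [inner_self_eq_zero.1 h, inner_zero_left]
    · rw [h, inner_zero_left]
  · intro h
    left
    rw [real_inner_comm, h]; simp

theorem sp_orth {l : List V} {x : V} : x ∈ (sp l)ᗮ ↔ ∀ β ∈ l, sAff β 0 x = x := by
  rw [Submodule.mem_orthogonal]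
  constructor
  · intro h β hβ
    exact rf_fix.2 (h β (mem_sp hβ))
  · intro h u hu
    induction hu using Submodule.span_induction with
    | mem y hy => exact rf_fix.1 (h y hy)
    | zero => simp
    | add a b _ _ ha hb => rw [inner_add_left, ha, hb, add_zero]
    | smul c a _ ha => rw [real_inner_smul_left, ha, mul_zero]

theorem sp_orth_cl {l : List V} {x : V} : x ∈ (sp l)ᗮ ↔ ∀ g ∈ cl (rl l), g x = x := by
  rw [sp_orth]
  constructor
  · intro h g hg
    have : cl (rl l) ≤ MulAction.stabilizer (Equiv.Perm V) x := by
      apply cl_le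
      intro g hg
      obtain ⟨β, hβ, rfl⟩ := List.mem_map.1 hg
      exact h β hβ
    exact this hg
  · intro h β hβ
    exact h _ (mem_cl (List.mem_map_of_mem hβ))

theorem sp_eq_of_orth [FiniteDimensional ℝ V] {l l' : List V} (h : (sp l)ᗮ = (sp l')ᗮ) :
    sp l = sp l' := by
  rw [← Submodule.orthogonal_orthogonal (sp l), h, Submodule.orthogonal_orthogonal]

theorem sp_of_cl [FiniteDimensional ℝ V] {l l' : List V} (h : cl (rl l) = cl (rl l')) :
    sp l = sp l' := by
  apply sp_eq_of_orth
  ext x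
  rw [sp_orth_cl, sp_orth_cl, h]

theorem indep_he [FiniteDimensional ℝ V] {l l' : List V} (h : HurwitzEquiv (rl l) (rl l'))
    (hi : Indep l) : Indep l' := by
  have h1 := he_length h
  simp only [rl_length] at h1
  rw [Indep, ← sp_of_cl (he_cl h), ← h1]
  exact hi

/-- every element of the generated group moves vectors within the span -/
theorem prod_sub_mem (l : List V) (x : V) : (rl l).prod x - x ∈ sp l := by
  induction l with
  | nil => simp
  | cons β l ih =>
    rw [sp_cons]
    simp only [rl_cons, List.prod_cons, Equiv.Perm.mul_apply]
    rw [rf_apply]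
    have : (rl l).prod x - (2 * ⟪(rl l).prod x, β⟫ / ⟪β, β⟫) • β - x =
        (-(2 * ⟪(rl l).prod x, β⟫ / ⟪β, β⟫)) • β + ((rl l).prod x - x) := by module
    rw [this]
    exact Submodule.add_mem_sup (Submodule.smul_mem _ _ (Submodule.mem_span_singleton_self β)) ih

theorem fix_prod [FiniteDimensional ℝ V] {l : List V} (hi : Indep l) {x : V} :
    x ∈ (sp l)ᗮ ↔ (rl l).prod x = x := by
  constructor
  · intro h
    rw [sp_orth_cl] at h
    exact h _ (list_prod_mem fun g hg => mem_cl hg)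
  · induction l with
    | nil => intro _; simp [sp_orth]
    | cons β l ih =>
      intro h
      have h1 : (rl l).prod x = sAff β 0 x := by
        simp only [rl_cons, List.prod_cons, Equiv.Perm.mul_apply] at h
        rw [← h, rf_rf, h]
      have h2 := prod_sub_mem l x
      have h3 : sAff β 0 x = x := by
        rw [h1, rf_apply] at h2
        have h4 : -((2 * ⟪x, β⟫ / ⟪β, β⟫) • β) ∈ sp l := by
          convert h2 using 1; abel
        rw [Submodule.neg_mem_iff] at h4
        by_cases h5 : 2 * ⟪x, β⟫ / ⟪β, β⟫ = 0
        · rw [rf_apply, h5]; simp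
        · exact absurd ((Submodule.smul_mem_iff _ h5).1 h4) (indep_notMem hi)
      have h6 := ih (indep_tail hi) (by rw [h1, h3])
      rw [sp_orth] at h6 ⊢
      intro γ hγ
      rcases List.mem_cons.1 hγ with rfl | hγ
      · exact h3
      · exact h6 γ hγ

theorem sp_of_prod [FiniteDimensional ℝ V] {l l' : List V} (hi : Indep l) (hi' : Indep l')
    (h : (rl l).prod = (rl l').prod) : sp l = sp l' := by
  apply sp_eq_of_orth
  ext x
  rw [fix_prod hi, fix_prod hi', h]

/-- Lemma A in terms of real dependence -/
theorem lemA' [FiniteDimensional ℝ V] {Ψ : Set V} (h : RS Ψ) {l : List V} (hl : ∀ x ∈ l, x ∈ Ψ)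
    (hi : ¬ Indep l) : ∃ x m, x ∈ Ψ ∧ (∀ y ∈ m, y ∈ Ψ) ∧
      HurwitzEquiv (rl l) (rl (x :: x :: m)) := by
  have hr : Set.range l.get = {x | x ∈ l} := by ext x; simp [List.mem_iff_get]
  have hdep : ¬ LinearIndependent ℝ l.get := by
    intro hlin
    apply hi
    have := linearIndependent_iff_card_eq_finrank_span.1 hlin
    rw [hr] at this
    rw [Fintype.card_fin] at this
    exact this.symm
  have hmem : ∀ i, l.get i ∈ Ψ := fun i => hl _ (List.get_mem l i)
  let A : Matrix (Fin l.length) (Fin l.length) ℤ := fun i j => ip (l.get j) (l.get i)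
  have hA : ∀ c : Fin l.length → ℝ, ∀ i,
      ((A.map (Int.castRingHom ℝ)).mulVec c) i * ⟪l.get i, l.get i⟫ =
        2 * ⟪∑ j, c j • l.get j, l.get i⟫ := by
    intro c i
    rw [sum_inner, Finset.mul_sum, Matrix.mulVec, dotProduct, Finset.sum_mul]
    apply Finset.sum_congr rfl
    intro j _
    have := ip_spec h (hmem i) (hmem j)
    rw [real_inner_smul_left]
    show ((ip (l.get j) (l.get i) : ℤ) : ℝ) * c j * _ = _
    linear_combination c j * this
  have hdet : A.det = 0 := by
    have h1 : (A.map (Int.castRingHom ℝ)).det = 0 := by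
      rw [← Matrix.exists_mulVec_eq_zero_iff]
      rw [Fintype.not_linearIndependent_iff] at hdep
      obtain ⟨c, hc, i, hci⟩ := hdep
      refine ⟨c, fun h0 => hci (by rw [h0]; rfl), ?_⟩
      funext j
      have := hA c j
      rw [hc, inner_zero_left, mul_zero] at this
      exact (mul_eq_zero.1 this).resolve_right (h.pos (hmem j)).ne'
    have h2 := RingHom.map_det (Int.castRingHom ℝ) A
    rw [RingHom.mapMatrix_apply, h1] at h2
    simpa using h2
  obtain ⟨v, hv, hAv⟩ := Matrix.exists_mulVec_eq_zero_iff.2 hdet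
  have hsum : ∑ j, (v j : ℝ) • l.get j = 0 := by
    have h1 : ∀ i, ⟪∑ j, (v j : ℝ) • l.get j, l.get i⟫ = 0 := by
      intro i
      have h2 := hA (fun j => (v j : ℝ)) i
      have h3 : (A.map (Int.castRingHom ℝ)).mulVec (fun j => (v j : ℝ)) i = 0 := by
        have h4 := congrFun hAv i
        simp only [Matrix.mulVec, dotProduct, Pi.zero_apply] at h4 ⊢
        have h5 := congrArg (Int.cast : ℤ → ℝ) h4
        push_cast at h5
        simpa using h5
      rw [h3, zero_mul] at h2
      linarith
    rw [← inner_self_eq_zero (𝕜 := ℝ)]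
    nth_rw 2 [← Finset.sum_congr rfl (fun j _ => rfl)]
    rw [inner_sum]
    apply Finset.sum_eq_zero
    intro i _
    rw [real_inner_smul_right, h1, mul_zero]
  have hvl : vl (List.ofFn fun i => (v i, l.get i)) = l := by
    simp only [vl, List.map_ofFn]
    exact List.ofFn_get l
  have := lemA h _ (List.ofFn fun i => (v i, l.get i)) le_rfl (by
      intro p hp
      rw [List.mem_ofFn] at hp
      obtain ⟨i, rfl⟩ := hp
      exact hmem i) (by
      rw [ws, List.map_ofFn, List.sum_ofFn]
      exact hsum) (by
      obtain ⟨i, hi⟩ := Function.ne_iff.1 hv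
      exact ⟨(v i, l.get i), by rw [List.mem_ofFn]; exact ⟨i, rfl⟩, hi⟩)
  rwa [hvl] at this

/-- Lemma B: every root which is integral for the list can be brought to the front. -/
theorem lemB [FiniteDimensional ℝ V] {Ψ : Set V} (h : RS Ψ) {β0 : V} (h0 : β0 ∈ Ψ) (k : ℕ) :
    ∀ L : List (ℤ × V), ms L ≤ k → In Ψ L → Indep (vl L) → ws L = β0 → JJ ⟪β0, β0⟫ L →
    ∃ m, (∀ y ∈ m, y ∈ Ψ) ∧ HurwitzEquiv (rl (vl L)) (rl (β0 :: m)) := by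
  induction k using Nat.strong_induction_on with
  | _ k ih =>
  intro L hk hL hi hws hJ
  have hB := h.pos h0
  have hne : L ≠ [] := by
    rintro rfl
    exact h.ne_zero _ h0 hws.symm
  obtain ⟨u, c, β, v, rfl, hmax⟩ := exists_max L hne
  have hβ : β ∈ Ψ := hL (c, β) (by simp)
  have hcn : c ≠ 0 := by
    rintro rfl
    have hz : ∀ M : List (ℤ × V), In Ψ M → (∀ p ∈ M, |(p.1 : ℝ)| * ‖p.2‖ ≤ 0) → ws M = 0 := by
      intro M hMI hM
      induction M with
      | nil => rfl
      | cons p M ih =>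
        simp only [List.forall_mem_cons] at hM
        obtain ⟨hp, hMI⟩ := In_cons.1 hMI
        have h2 : 0 < ‖p.2‖ := norm_pos_iff.2 (h.ne_zero _ hp)
        have h3 : (p.1 : ℝ) = 0 := by
          by_contra hcon
          have := mul_pos (abs_pos.2 hcon) h2
          linarith [hM.1]
        rw [ws_cons, h3, ih hMI hM.2]; simp
    rw [hz _ hL (by simpa using hmax)] at hws
    exact h.ne_zero _ h0 hws.symm
  have hpar : ∀ p ∈ u ++ v, |⟪p.2, β⟫| < ‖p.2‖ * ‖β‖ := by
    intro p hp
    by_contra hcon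
    obtain ⟨x, m, -, -, hE⟩ := pair_of_par h hL hp (not_lt.1 hcon)
    exact not_indep_pair (indep_he hE hi)
  by_cases htot : (c : ℝ) * ⟪ws (u ++ (c, β) :: v), β⟫ < (c : ℝ) * c * ⟪β, β⟫
  · obtain ⟨L', ⟨hE, hws', hin, hJ'⟩, hms, -⟩ := descent h hL hcn
      (fun p hp => hmax p (by rcases List.mem_append.1 hp with hp | hp <;> simp [hp])) hpar htot
    obtain ⟨m, hm, hE'⟩ := ih (ms L') (by omega) L' le_rfl hin (indep_he hE hi)
      (by rw [hws', hws]) (hJ' _ hJ)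
    exact ⟨m, hm, he_trans hE hE'⟩
  · rw [hws, not_lt] at htot
    obtain ⟨k, hk⟩ := hJ (c, β) (by simp)
    simp only at hk
    have hA := h.pos hβ
    have hc1 : (1 : ℝ) ≤ |(c : ℝ)| := by
      have : (1 : ℤ) ≤ |c| := Int.one_le_abs hcn
      exact_mod_cast this
    have hk1 : (1 : ℝ) ≤ |(k : ℝ)| := by
      have hkn : k ≠ 0 := by
        rintro rfl
        simp only [Int.cast_zero, zero_mul, mul_eq_zero] at hk
        rcases hk with hk | hk
        · exact hcn (by exact_mod_cast hk)
        · exact hA.ne' hk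
      have : (1 : ℤ) ≤ |k| := Int.one_le_abs hkn
      exact_mod_cast this
    have h1 : |(c : ℝ)| * ⟪β, β⟫ ≤ |⟪β0, β⟫| := by
      have h2 : |(c : ℝ)| * (|(c : ℝ)| * ⟪β, β⟫) ≤ |(c : ℝ)| * |⟪β0, β⟫| := by
        rw [← mul_assoc, abs_mul_abs_self, ← abs_mul]
        exact htot.trans (le_abs_self _)
      exact le_of_mul_le_mul_left h2 (by linarith)
    have h2 : ⟪β, β⟫ ≤ |⟪β0, β⟫| := by nlinarith
    have h3 : ⟪β0, β0⟫ ≤ |⟪β0, β⟫| := by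
      have : |(c : ℝ)| * ⟪β, β⟫ = |(k : ℝ)| * ⟪β0, β0⟫ := by
        rw [← abs_of_pos hA, ← abs_of_pos hB, ← abs_mul, ← abs_mul, hk]
      nlinarith
    have h4 : ‖β0‖ * ‖β‖ ≤ |⟪β0, β⟫| := by
      rw [real_inner_self_eq_norm_mul_norm] at h2 h3
      nlinarith [sq_nonneg (‖β0‖ - ‖β‖)]
    have h5 := rf_par (h.ne_zero _ h0) (h.ne_zero _ hβ) h4
    obtain ⟨m, hm, hE⟩ := v_pull h (In_vl hL) (β := β) (by simp)
    refine ⟨m, hm, ?_⟩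
    rw [rl_cons, h5]
    exact hE

/-! ### lattices -/

def gens (l : List V) (N : ℝ) : Set V :=
  {x | ∃ β ∈ l, ∃ c k : ℤ, x = (c : ℝ) • β ∧ (c : ℝ) * ⟪β, β⟫ = k * N}

def Lat (l : List V) (N : ℝ) : AddSubgroup V := AddSubgroup.closure (gens l N)

theorem Lat_scale {l : List V} {N N' : ℝ} {e f : ℤ} (hef : (e : ℝ) * N' = f * N) {x : V}
    (hx : x ∈ Lat l N') : (e : ℝ) • x ∈ Lat l N := by
  induction hx using AddSubgroup.closure_induction with
  | mem y hy =>
    obtain ⟨β, hβ, c, k, rfl, hk⟩ := hy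
    refine AddSubgroup.subset_closure ⟨β, hβ, e * c, k * f, ?_, ?_⟩
    · push_cast; rw [smul_smul]
    · push_cast; linear_combination (e : ℝ) * hk + (k : ℝ) * hef
  | zero => rw [smul_zero]; exact zero_mem _
  | add a b _ _ ha hb => rw [smul_add]; exact add_mem ha hb
  | neg a _ ha => rw [smul_neg]; exact neg_mem ha

theorem Lat_self {l : List V} {β : V} (h : β ∈ l) : β ∈ Lat l ⟪β, β⟫ :=
  AddSubgroup.subset_closure ⟨β, h, 1, 1, by simp, by simp⟩

theorem Lat_le_sp {l : List V} {N : ℝ} {x : V} (hx : x ∈ Lat l N) : x ∈ sp l := by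
  induction hx using AddSubgroup.closure_induction with
  | mem y hy =>
    obtain ⟨β, hβ, c, k, rfl, hk⟩ := hy
    exact Submodule.smul_mem _ _ (mem_sp hβ)
  | zero => exact zero_mem _
  | add a b _ _ ha hb => exact add_mem ha hb
  | neg a _ ha => exact neg_mem ha

theorem Lat_cons {x : V} {l : List V} {N : ℝ} {y : V} (hy : y ∈ Lat (x :: l) N) :
    ∃ c k : ℤ, (c : ℝ) * ⟪x, x⟫ = k * N ∧ y - (c : ℝ) • x ∈ Lat l N := by
  induction hy using AddSubgroup.closure_induction with
  | mem y hy =>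
    obtain ⟨β, hβ, c, k, rfl, hk⟩ := hy
    rcases List.mem_cons.1 hβ with rfl | hβ
    · exact ⟨c, k, hk, by rw [sub_self]; exact zero_mem _⟩
    · refine ⟨0, 0, by simp, ?_⟩
      rw [Int.cast_zero, zero_smul, sub_zero]
      exact AddSubgroup.subset_closure ⟨β, hβ, c, k, rfl, hk⟩
  | zero => exact ⟨0, 0, by simp, by simp⟩
  | add a b _ _ ha hb =>
    obtain ⟨c, k, h1, h2⟩ := ha
    obtain ⟨c', k', h1', h2'⟩ := hb
    refine ⟨c + c', k + k', by push_cast; linear_combination h1 + h1', ?_⟩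
    have := add_mem h2 h2'
    convert this using 1
    push_cast
    module
  | neg a _ ha =>
    obtain ⟨c, k, h1, h2⟩ := ha
    refine ⟨-c, -k, by push_cast; linear_combination -h1, ?_⟩
    have := neg_mem h2
    convert this using 1
    push_cast
    module

theorem Lat_list (N : ℝ) (l : List V) : ∀ y ∈ Lat l N,
    ∃ L : List (ℤ × V), vl L = l ∧ ws L = y ∧ JJ N L := by
  induction l with
  | nil =>
    intro y hy
    refine ⟨[], rfl, ?_, by intro p hp; simp at hp⟩
    have : gens ([] : List V) N = ∅ := by ext; simp [gens]
    rw [Lat, this, AddSubgroup.closure_empty, AddSubgroup.mem_bot] at hy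
    exact hy.symm
  | cons x l ih =>
    intro y hy
    obtain ⟨c, k, hk, h2⟩ := Lat_cons hy
    obtain ⟨L, hL, hws, hJ⟩ := ih _ h2
    refine ⟨(c, x) :: L, by simp [hL], by simp [hws], JJ_cons.2 ⟨⟨k, hk⟩, hJ⟩⟩

theorem lemB' [FiniteDimensional ℝ V] {Ψ : Set V} (h : RS Ψ) {l : List V} (hl : ∀ x ∈ l, x ∈ Ψ)
    (hi : Indep l) {β0 : V} (h0 : β0 ∈ Ψ) (hm : β0 ∈ Lat l ⟪β0, β0⟫) :
    ∃ m, (∀ y ∈ m, y ∈ Ψ) ∧ HurwitzEquiv (rl l) (rl (β0 :: m)) := by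
  obtain ⟨L, rfl, hws, hJ⟩ := Lat_list _ _ _ hm
  exact lemB h h0 _ L le_rfl (fun p hp => hl _ (List.mem_map_of_mem hp)) hi hws hJ

theorem RS_of {Φ : Set V} (h : IsCrystRootSystem Φ) : RS Φ :=
  ⟨h.ne_zero, h.refl_mem, h.cryst⟩

theorem neg_mem_root {Φ : Set V} (h : RS Φ) {α : V} (hα : α ∈ Φ) : -α ∈ Φ := by
  have h1 := h.refl_mem α hα α hα
  have : sAff α 0 α = -α := by
    rw [rf_apply, mul_div_assoc, div_self (h.pos hα).ne']
    module
  rwa [this] at h1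

/-- a root whose reflection lies in the group generated by a list of roots is integral for
this list -/
theorem lemG [FiniteDimensional ℝ V] {Φ : Set V} (hΦ : IsCrystRootSystem Φ) {l : List V}
    (hl : ∀ x ∈ l, x ∈ Φ) {α : V} (hα : α ∈ Φ) (hs : sAff α 0 ∈ cl (rl l)) :
    α ∈ Lat l ⟪α, α⟫ := by
  have h := RS_of hΦ
  let Ψ : Set V := {γ | γ ∈ Φ ∧ γ ∈ Lat l ⟪γ, γ⟫}
  have hΨ : RS Ψ := by
    refine ⟨fun γ hγ => h.ne_zero γ hγ.1, ?_, fun a ha b hb => h.cryst a ha.1 b hb.1⟩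
    intro a ha b hb
    refine ⟨h.refl_mem a ha.1 b hb.1, ?_⟩
    rw [rf_inner, rf_ip h ha.1 hb.1]
    exact sub_mem hb.2 (Lat_scale (ip_symm h ha.1 hb.1) ha.2)
  have hlΨ : ∀ x ∈ l, x ∈ Ψ := fun x hx => ⟨hl x hx, Lat_self hx⟩
  have hex : ∃ k : ℕ, ∃ m : List V, (∀ x ∈ m, x ∈ Ψ) ∧ (rl m).prod = sAff α 0 ∧ m.length = k := by
    have : ∀ g ∈ cl (rl l), ∃ m : List V, (∀ x ∈ m, x ∈ Ψ) ∧ (rl m).prod = g := by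
      intro g hg
      induction hg using Subgroup.closure_induction with
      | mem x hx =>
        obtain ⟨β, hβ, rfl⟩ := List.mem_map.1 hx
        exact ⟨[β], by simpa using hlΨ β hβ, by simp⟩
      | one => exact ⟨[], by simp, rfl⟩
      | mul a b _ _ ha hb =>
        obtain ⟨m, hm, rfl⟩ := ha
        obtain ⟨m', hm', rfl⟩ := hb
        refine ⟨m ++ m', ?_, by simp⟩
        intro x hx
        exact (List.mem_append.1 hx).elim (hm x) (hm' x)
      | inv a _ ha =>
        obtain ⟨m, hm, rfl⟩ := ha
        refine ⟨m.reverse, by simpa using hm, ?_⟩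
        rw [List.prod_inv_reverse]
        congr 1
        simp [rl, rf_inv, List.map_reverse, Function.comp_def]
    obtain ⟨m, hm, hp⟩ := this _ hs
    exact ⟨_, m, hm, hp, rfl⟩
  classical
  obtain ⟨m, hm, hp, hlen⟩ := Nat.find_spec hex
  have hmin := fun k => Nat.find_min hex (m := k)
  have hi : Indep m := by
    by_contra hcon
    obtain ⟨x, m', hx, hm', hE⟩ := lemA' hΨ hm hcon
    have e1 := he_length hE
    have e2 := he_prod hE
    simp only [rl_length, List.length_cons] at e1
    refine hmin m'.length (by omega) ⟨m', hm', ?_, rfl⟩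
    rw [← hp, e2]
    simp only [rl_cons, List.prod_cons]
    rw [← mul_assoc, rf_sq, one_mul]
  have hi1 : Indep [α] := by
    have : sp [α] = Submodule.span ℝ {α} := by rw [sp]; congr 1; ext; simp
    rw [Indep, this, finrank_span_singleton (h.ne_zero α hα)]
    rfl
  have hsp : sp m = sp [α] := sp_of_prod hi hi1 (by simp [hp])
  have hm1 : m.length = 1 := by
    rw [← hi, hsp]; exact hi1
  obtain ⟨γ, rfl⟩ := List.length_eq_one_iff.1 hm1
  obtain ⟨hγ, hγL⟩ := hm γ (by simp)
  have : γ ∈ sp [α] := hsp ▸ mem_sp (by simp)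
  have e : sp [α] = Submodule.span ℝ {α} := by rw [sp]; congr 1; ext; simp
  rw [e, Submodule.mem_span_singleton] at this
  obtain ⟨c, rfl⟩ := this
  rcases hΦ.reduced α hα c hγ with rfl | rfl
  · simpa using hγL
  · have := neg_mem hγL
    simp only [neg_smul, one_smul, neg_neg, inner_neg_left, inner_neg_right] at this
    exact this

/-- the list generates all reflections for roots in its span -/
def Sat (Φ : Set V) (l : List V) : Prop := ∀ γ ∈ Φ, γ ∈ sp l → sAff γ 0 ∈ cl (rl l)

theorem Sat_he [FiniteDimensional ℝ V] {Φ : Set V} {l l' : List V}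
    (h : HurwitzEquiv (rl l) (rl l')) (hs : Sat Φ l) : Sat Φ l' := by
  intro γ hγ hg
  rw [← he_cl h]
  rw [← sp_of_cl (he_cl h)] at hg
  exact hs γ hγ hg

theorem Sat_tail [FiniteDimensional ℝ V] {Φ : Set V} (hΦ : IsCrystRootSystem Φ) {x : V}
    {m : List V} (hl : ∀ y ∈ x :: m, y ∈ Φ) (hi : Indep (x :: m)) (hs : Sat Φ (x :: m)) :
    Sat Φ m := by
  intro γ hγ hg
  have h1 := hs γ hγ (by rw [sp_cons]; exact Submodule.mem_sup_right hg)
  obtain ⟨c, k, hk, h2⟩ := Lat_cons (lemG hΦ hl hγ h1)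
  have hc : (c : ℝ) = 0 := by
    by_contra hc
    have h3 := sub_mem hg (Lat_le_sp h2)
    rw [sub_sub_cancel] at h3
    exact indep_notMem hi ((Submodule.smul_mem_iff _ hc).1 h3)
  rw [hc, zero_smul, sub_zero] at h2
  obtain ⟨m', -, hE⟩ := lemB' (RS_of hΦ) (fun y hy => hl y (by simp [hy])) (indep_tail hi) hγ h2
  rw [he_cl hE]
  exact mem_cl (by simp)

/-- transitivity on reduced factorizations -/
theorem lemRed [FiniteDimensional ℝ V] {Φ : Set V} (hΦ : IsCrystRootSystem Φ) (l' : List V) :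
    ∀ l : List V, (∀ y ∈ l, y ∈ Φ) → (∀ y ∈ l', y ∈ Φ) → Indep l → Indep l' →
      (rl l).prod = (rl l').prod → Sat Φ l → HurwitzEquiv (rl l) (rl l') := by
  induction l' with
  | nil =>
    intro l hl hl' hi hi' hp hs
    have h1 := sp_of_prod hi hi' hp
    have : l.length = 0 := by rw [← hi, h1]; exact hi'
    rw [List.length_eq_zero_iff.1 this]
    exact he_refl _
  | cons β m' ih =>
    intro l hl hl' hi hi' hp hs
    have h1 := sp_of_prod hi hi' hp
    have hβ : β ∈ Φ := hl' β (by simp)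
    have hβs : β ∈ sp l := h1 ▸ mem_sp (by simp)
    obtain ⟨m, hm, hE⟩ := lemB' (RS_of hΦ) hl hi hβ (lemG hΦ hl hβ (hs β hβ hβs))
    have hi2 := indep_he hE hi
    have hl2 : ∀ y ∈ β :: m, y ∈ Φ := by
      intro y hy
      rcases List.mem_cons.1 hy with rfl | hy
      · exact hβ
      · exact hm y hy
    have hp2 : (rl m).prod = (rl m').prod := by
      have e := he_prod hE
      rw [hp] at e
      simp only [rl_cons, List.prod_cons] at e
      exact (mul_left_cancel e).symm
    exact he_trans hE (he_cons _ (ih m hm (fun y hy => hl' y (by simp [hy])) (indep_tail hi2)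
      (indep_tail hi') hp2 (Sat_tail hΦ hl2 hi2 (Sat_he hE hs))))

theorem lemC_same [FiniteDimensional ℝ V] {Φ : Set V} (hΦ : IsCrystRootSystem Φ) {m : List V}
    (hm : ∀ y ∈ m, y ∈ Φ) (hs : Sat Φ m) {x y : V} (hx : x ∈ Φ) (hy : y ∈ Φ) (hxm : x ∉ sp m)
    (hxy : y - x ∈ sp m) (hn : ⟪x, x⟫ = ⟪y, y⟫) :
    HurwitzEquiv (rl (x :: x :: m)) (rl (y :: y :: m)) := by
  classical
  have h := RS_of hΦ
  have hconj : ∀ z g, sAff g 0 ∈ cl (rl m) →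
      HurwitzEquiv (rl (z :: z :: m)) (rl (sAff g 0 z :: sAff g 0 z :: m)) := by
    intro z g hg
    have := he_pair_cl (rl m) _ hg (sAff z 0) (rf_sq z)
    rw [← rf_conj] at this
    exact this
  let O : Set V := {z | z ∈ Φ ∧ HurwitzEquiv (rl (x :: x :: m)) (rl (z :: z :: m)) ∧
    ⟪z, z⟫ = ⟪x, x⟫ ∧ z - x ∈ sp m}
  have hO : O.Finite := hΦ.finite.subset fun z hz => hz.1
  have hxO : x ∈ O := ⟨hx, he_refl _, rfl, by simp⟩
  have hOc : ∀ β ∈ m, ∀ z ∈ O, sAff β 0 z ∈ O := by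
    rintro β hβ z ⟨h1, h2, h3, h4⟩
    refine ⟨h.refl_mem _ (hm β hβ) _ h1,
      he_trans h2 (hconj z β (mem_cl (List.mem_map_of_mem hβ))), by rw [rf_inner, h3], ?_⟩
    rw [rf_apply]
    have e : z - (2 * ⟪z, β⟫ / ⟪β, β⟫) • β - x = (z - x) - (2 * ⟪z, β⟫ / ⟪β, β⟫) • β := by abel
    rw [e]
    exact sub_mem h4 (Submodule.smul_mem _ _ (mem_sp hβ))
  let F := hO.toFinset
  let S : V := ∑ z ∈ F, z
  have hSo : S ∈ (sp m)ᗮ := by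
    rw [sp_orth]
    intro β hβ
    have e : sAff β 0 S = ∑ z ∈ F, sAff β 0 z := by
      simp only [rf_apply, Finset.sum_sub_distrib, S, sum_inner]
      congr 1
      rw [← Finset.sum_smul, ← Finset.sum_div, ← Finset.mul_sum]
    rw [e]
    apply Finset.sum_bij' (fun z _ => sAff β 0 z) (fun z _ => sAff β 0 z)
    · intro z hz
      exact hO.mem_toFinset.2 (hOc β hβ z (hO.mem_toFinset.1 hz))
    · intro z hz
      exact hO.mem_toFinset.2 (hOc β hβ z (hO.mem_toFinset.1 hz))
    · intro z _; exact rf_rf β z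
    · intro z _; exact rf_rf β z
    · intro z _; rfl
  have hort : ∀ u ∈ sp m, ⟪S, u⟫ = 0 := fun u hu => by
    rw [real_inner_comm]; exact (Submodule.mem_orthogonal _ _).1 hSo u hu
  have hcard : 0 < (F.card : ℝ) := by
    exact_mod_cast Finset.card_pos.2 ⟨x, hO.mem_toFinset.2 hxO⟩
  have hSx : S - (F.card : ℝ) • x ∈ sp m := by
    have : S - (F.card : ℝ) • x = ∑ z ∈ F, (z - x) := by
      rw [Finset.sum_sub_distrib, Finset.sum_const, Nat.cast_smul_eq_nsmul]
    rw [this]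
    exact Submodule.sum_mem _ fun z hz => (hO.mem_toFinset.1 hz).2.2.2
  have hS0 : S ≠ 0 := by
    intro h0
    rw [h0, zero_sub, Submodule.neg_mem_iff] at hSx
    exact hxm ((Submodule.smul_mem_iff _ hcard.ne').1 hSx)
  have hSy : 0 < ⟪S, y⟫ := by
    have e1 := hort _ hSx
    have e2 := hort _ hxy
    rw [inner_sub_right, real_inner_smul_right] at e1
    rw [inner_sub_right] at e2
    have e3 : 0 < ⟪S, S⟫ := real_inner_self_pos.2 hS0
    have e4 : 0 < (F.card : ℝ) * ⟪S, y⟫ := by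
      have : ⟪S, y⟫ = ⟪S, x⟫ := by linarith
      rw [this]; linarith
    exact pos_of_mul_pos_right e4 hcard.le
  obtain ⟨z, hz, hzy⟩ : ∃ z ∈ F, 0 < ⟪z, y⟫ := by
    simp only [S, sum_inner] at hSy
    exact Finset.exists_lt_of_sum_lt (f := fun _ => (0 : ℝ)) (by simpa using hSy)
  obtain ⟨hzΦ, hzE, hzn, hzx⟩ := hO.mem_toFinset.1 hz
  refine he_trans hzE ?_
  by_cases hzeq : z = y
  · rw [hzeq]; exact he_refl _
  have hzpos := h.pos hzΦ
  have hspec := ip_spec h hzΦ hy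
  have hlt : 2 * ⟪y, z⟫ < 2 * ⟪z, z⟫ := by
    have : 0 < ⟪y - z, y - z⟫ := real_inner_self_pos.2 (sub_ne_zero.2 (Ne.symm hzeq))
    simp only [inner_sub_left, inner_sub_right] at this
    rw [real_inner_comm y z] at this
    linarith
  rw [real_inner_comm] at hzy
  have hip : ip y z = 1 := by
    have h1 : (0 : ℝ) < ip y z := by
      by_contra hcon
      nlinarith [not_lt.1 hcon]
    have h2 : (ip y z : ℝ) < 2 := by
      by_contra hcon
      nlinarith [not_lt.1 hcon]
    have h1' : 0 < ip y z := by exact_mod_cast h1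
    have h2' : ip y z < 2 := by exact_mod_cast h2
    omega
  have hγ : y - z ∈ Φ := by
    have := h.refl_mem z hzΦ y hy
    rw [rf_ip h hzΦ hy, hip] at this
    simpa using this
  have hγs : y - z ∈ sp m := by
    have := sub_mem hxy hzx
    simpa using this
  have := hconj z (y - z) (hs _ hγ hγs)
  have e : sAff (y - z) 0 z = y := by
    rw [hip, Int.cast_one, one_mul] at hspec
    have e1 : ⟪z, y - z⟫ = -(⟪z, z⟫ / 2) := by
      rw [inner_sub_right, real_inner_comm]; linarith
    have e2 : ⟪y - z, y - z⟫ = ⟪z, z⟫ := by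
      simp only [inner_sub_left, inner_sub_right]
      rw [real_inner_comm y z]
      linarith
    rw [rf_apply, e1, e2]
    have : 2 * -(⟪z, z⟫ / 2) / ⟪z, z⟫ = (-1 : ℝ) := by field_simp
    rw [this]; module
  rwa [e] at this

theorem lemC [FiniteDimensional ℝ V] {Φ : Set V} (hΦ : IsCrystRootSystem Φ) {m : List V}
    (hm : ∀ y ∈ m, y ∈ Φ) {x y : V} (hx : x ∈ Φ) (hy : y ∈ Φ)
    (hix : Indep (x :: m)) (hxy : y ∈ Lat (x :: m) ⟪y, y⟫)
    (hyx : x ∈ Lat (y :: m) ⟪x, x⟫) (hs : Sat Φ m) :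
    HurwitzEquiv (rl (x :: x :: m)) (rl (y :: y :: m)) := by
  have h := RS_of hΦ
  obtain ⟨c, k, hk, h1⟩ := Lat_cons hxy
  obtain ⟨c', k', hk', h2⟩ := Lat_cons hyx
  have hxm := indep_notMem hix
  have h1 := Lat_le_sp h1
  have h2 := Lat_le_sp h2
  have hcc : (c' : ℝ) * c = 1 := by
    by_contra hcon
    have h3 := add_mem h2 (Submodule.smul_mem _ (c' : ℝ) h1)
    have e : x - (c' : ℝ) • y + (c' : ℝ) • (y - (c : ℝ) • x) = (1 - (c' : ℝ) * c) • x := by module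
    rw [e] at h3
    exact hxm ((Submodule.smul_mem_iff _ (sub_ne_zero.2 (Ne.symm hcon))).1 h3)
  have hX := h.pos hx
  have hY := h.pos hy
  have hkk : (k' : ℝ) * k = 1 := by
    have : ((k' : ℝ) * k) * (⟪x, x⟫ * ⟪y, y⟫) = 1 * (⟪x, x⟫ * ⟪y, y⟫) := by
      linear_combination (-(k' : ℝ) * ⟪x, x⟫) * hk - (c : ℝ) * ⟪x, x⟫ * hk' + ⟪x, x⟫ * ⟪y, y⟫ * hcc
    exact mul_right_cancel₀ (mul_pos hX hY).ne' this
  have hc : c = 1 ∨ c = -1 := by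
    have : c' * c = 1 := by exact_mod_cast hcc
    exact Int.isUnit_iff.1 (IsUnit.of_mul_eq_one_right c' this)
  have hk1 : k = 1 ∨ k = -1 := by
    have : k' * k = 1 := by exact_mod_cast hkk
    exact Int.isUnit_iff.1 (IsUnit.of_mul_eq_one_right k' this)
  have hn : ⟪x, x⟫ = ⟪y, y⟫ := by
    rcases hc with rfl | rfl <;> rcases hk1 with rfl | rfl <;> push_cast at hk <;> linarith
  rcases hc with rfl | rfl
  · exact lemC_same hΦ hm hs hx hy hxm (by simpa using h1) hn
  · have hneg : sAff (-x) 0 = sAff x 0 := by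
      simpa using rf_scale x (-1) (by norm_num)
    have := lemC_same hΦ hm hs (neg_mem_root h hx) hy (by simpa using hxm)
      (by simpa using h1) (by simpa using hn)
    simpa [hneg] using this

theorem exists_roots {Φ : Set V} {k : ℕ} (t : Fin k → Equiv.Perm V)
    (ht : ∀ i, t i ∈ FinReflections Φ) :
    ∃ l : List V, (∀ y ∈ l, y ∈ Φ) ∧ rl l = List.ofFn t := by
  choose a ha hta using ht
  refine ⟨List.ofFn a, ?_, ?_⟩
  · intro y hy
    rw [List.mem_ofFn] at hy
    obtain ⟨i, rfl⟩ := hy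
    exact ha i
  · rw [rl, List.map_ofFn]
    congr 1
    funext i
    exact (hta i).symm

theorem normal_form [FiniteDimensional ℝ V] {Φ : Set V} (hΦ : IsCrystRootSystem Φ)
    {l : List V} (hl : ∀ y ∈ l, y ∈ Φ) (hlen : l.length = Module.finrank ℝ V + 1)
    (hc : cl (rl l) = WeylGroup Φ) :
    ∃ x m, x ∈ Φ ∧ (∀ y ∈ m, y ∈ Φ) ∧ HurwitzEquiv (rl l) (rl (x :: x :: m)) ∧
      Indep (x :: m) ∧ cl (rl (x :: m)) = WeylGroup Φ ∧ Sat Φ m := by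
  have h := RS_of hΦ
  have hni : ¬ Indep l := by
    intro hi
    have := Submodule.finrank_le (sp l)
    rw [hi] at this
    omega
  obtain ⟨x, m, hx, hm, hE⟩ := lemA' h hl hni
  have hxm : ∀ y ∈ x :: m, y ∈ Φ := by
    intro y hy
    rcases List.mem_cons.1 hy with rfl | hy
    · exact hx
    · exact hm y hy
  have hcl : cl (rl (x :: m)) = WeylGroup Φ := by
    rw [← hc, he_cl hE, cl, cl]
    congr 1
    ext g
    simp
  have href : ∀ γ ∈ Φ, sAff γ 0 ∈ cl (rl (x :: m)) := by
    intro γ hγ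
    rw [hcl]
    exact Subgroup.subset_closure ⟨γ, hγ, rfl⟩
  have htop : sp (x :: m) = ⊤ := by
    rw [eq_top_iff, ← hΦ.spanning, Submodule.span_le]
    intro γ hγ
    exact Lat_le_sp (lemG hΦ hxm hγ (href γ hγ))
  have hi : Indep (x :: m) := by
    have := he_length hE
    simp only [rl_length, List.length_cons] at this
    rw [Indep, htop, finrank_top]
    simp only [List.length_cons]
    omega
  exact ⟨x, m, hx, hm, hE, hi, hcl, Sat_tail hΦ hxm hi fun γ hγ _ => href γ hγ⟩

theorem main [FiniteDimensional ℝ V] {Φ : Set V} (hΦ : IsCrystRootSystem Φ)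
    {l l' : List V} (hl : ∀ y ∈ l, y ∈ Φ) (hl' : ∀ y ∈ l', y ∈ Φ)
    (hlen : l.length = Module.finrank ℝ V + 1) (hlen' : l'.length = Module.finrank ℝ V + 1)
    (hc : cl (rl l) = WeylGroup Φ) (hc' : cl (rl l') = WeylGroup Φ)
    (hp : (rl l).prod = (rl l').prod) : HurwitzEquiv (rl l) (rl l') := by
  obtain ⟨x, m, hx, hm, hE, hi, hcl, hs⟩ := normal_form hΦ hl hlen hc
  obtain ⟨y, m', hy, hm', hE', hi', hcl', hs'⟩ := normal_form hΦ hl' hlen' hc'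
  have hpm : (rl m).prod = (rl m').prod := by
    rw [he_prod hE, he_prod hE'] at hp
    simp only [rl_cons, List.prod_cons] at hp
    rw [← mul_assoc, ← mul_assoc, rf_sq, rf_sq, one_mul, one_mul] at hp
    exact hp
  have hred := lemRed hΦ m' m hm hm' (indep_tail hi) (indep_tail hi') hpm hs
  have hyE : HurwitzEquiv (rl (y :: m')) (rl (y :: m)) := he_cons _ (he_symm hred)
  have hyyE : HurwitzEquiv (rl (y :: y :: m)) (rl (y :: y :: m')) := he_cons _ (he_cons _ hred)
  have hcly : cl (rl (y :: m)) = WeylGroup Φ := by rw [← he_cl hyE, hcl']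
  have hxm : ∀ z ∈ x :: m, z ∈ Φ := by
    intro z hz
    rcases List.mem_cons.1 hz with rfl | hz
    · exact hx
    · exact hm z hz
  have hym : ∀ z ∈ y :: m, z ∈ Φ := by
    intro z hz
    rcases List.mem_cons.1 hz with rfl | hz
    · exact hy
    · exact hm z hz
  have hC := lemC hΦ hm hx hy hi
    (lemG hΦ hxm hy (by rw [hcl]; exact Subgroup.subset_closure ⟨y, hy, rfl⟩))
    (lemG hΦ hym hx (by rw [hcly]; exact Subgroup.subset_closure ⟨x, hx, rfl⟩)) hs
  exact he_trans hE (he_trans hC (he_trans hyyE (he_symm hE')))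

end Hz

theorem statement_19 (Φ : Set V) (hΦ : IsCrystRootSystem Φ) (hirr : IsIrreducibleRS Φ)
    (n : ℕ) (hrank : Module.finrank ℝ V = n)
    (w : Equiv.Perm V) (hw : w ∈ AffWeylGroup Φ) (hqc : IsQuasiCoxeterAff Φ n w)
    (w' : Equiv.Perm V) (hw' : w' ∈ WeylGroup Φ)
    (hp : ∀ v : V, w' v = w v - w 0)
    (t r : Fin (n + 1) → Equiv.Perm V)
    (ht : ∀ i, t i ∈ FinReflections Φ) (hr : ∀ i, r i ∈ FinReflections Φ)
    (htp : (List.ofFn t).prod = w') (hrp : (List.ofFn r).prod = w')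
    (htg : Subgroup.closure (Set.range t) = WeylGroup Φ)
    (hrg : Subgroup.closure (Set.range r) = WeylGroup Φ) :
    HurwitzEquiv (List.ofFn t) (List.ofFn r) := by
  have hfd : FiniteDimensional ℝ V := by
    have : (⊤ : Submodule ℝ V).FG := by
      rw [← hΦ.spanning]
      exact Submodule.fg_span hΦ.finite
    exact ⟨this⟩
  obtain ⟨l, hl, hlt⟩ := Hz.exists_roots t ht
  obtain ⟨l', hl', hlr⟩ := Hz.exists_roots r hr
  have hset : ∀ q : Fin (n + 1) → Equiv.Perm V,
      Hz.cl (List.ofFn q) = Subgroup.closure (Set.range q) := by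
    intro q
    rw [Hz.cl]
    congr 1
    ext g
    simp only [Set.mem_setOf_eq, List.mem_ofFn, Set.mem_range]
  rw [← hlt, ← hlr]
  apply Hz.main hΦ hl hl'
  · rw [← Hz.rl_length, hlt, List.length_ofFn, hrank]
  · rw [← Hz.rl_length, hlr, List.length_ofFn, hrank]
  · rw [hlt, hset, htg]
  · rw [hlr, hset, hrg]
  · rw [hlt, hlr, htp, hrp]


end
end
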